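/- Assume f is locally surjective at 0 and the derivative Df(x) : ℝ^{n+2} → ℝ² is surjective for every x ∈ U \ {0} (0 is an isolated critical point). Then there exists ε₀ > 0 such that for every 0 < ε ≤ ε₀ there exists η₀ > 0 such that for every 0 < η ≤ η₀ the restriction of f to the Milnor tube N(ε,η) = {x ∈ B̄(0,ε) : ‖f(x)‖ = η} is a locally trivial fibration N(ε,η) → {w ∈ ℝ² : ‖w‖ = η}. -/

import Mathlib

/-- `p : Z → B` is a locally trivial fibration (with some fibre `F`). -/
def IsLocTrivFib {Z B : Type} [TopologicalSpace Z] [TopologicalSpace B] (p : Z → B) : Prop :=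
  ∃ (F : Type) (_ : TopologicalSpace F), Continuous p ∧
    ∀ b : B, ∃ W : Set B, IsOpen W ∧ b ∈ W ∧
      ∃ e : (p ⁻¹' W) ≃ₜ (W × F), ∀ z : (p ⁻¹' W), ((e z).1 : B) = p (z : Z)

/-!
Over a small circle in the plane, a trivialisation comes from lifting the rotation field to a vector
field on the tube and following its flow. The flow stays in the tube if the lift is tangent to the
sphere of radius `ε`, which is possible where the sphere is transverse to the fibres of `f`. By
compactness, transversality near `f ⁻¹' {0}` for small `η` follows from transversality along
`f ⁻¹' {0}`.

If the latter failed on arbitrarily small spheres, then `d‖x‖²` would be a combination of the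
differentials `dfᵢ` at zeros `x ≠ 0` of `f` accumulating at `0`. Instead of choosing an analytic
curve through such points, one evaluates analytic germs along an ultrafilter of such points, in the
field of germs of real functions along it. There `‖x‖²` is a nonzero infinitesimal, hence
transcendental over `ℝ`, so some derivation of this field does not kill it. Weierstrass division
shows that the derivation can be chosen to be a combination of directional derivatives on analytic
germs. It then obeys the relation between the differentials, but it kills each `fᵢ`, because `fᵢ`
vanishes in the field.
-/

section Derivations

open TensorProduct Polynomial

theorem formallySmooth_field_of_charZero {A L : Type*} [CommRing A] [IsDomain A] [Field L]
    [CharZero L] [Algebra A L] [FaithfulSMul A L] : Algebra.FormallySmooth A L := by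
  let K := FractionRing A
  let : Algebra K L := FractionRing.liftAlgebra A L
  have : CharZero K := (algebraMap K L).charZero
  have : Algebra.FormallySmooth A K := .of_isLocalization (nonZeroDivisors A)
  obtain ⟨ι, v, hv⟩ := exists_isTranscendenceBasis' K L
  have : Algebra.IsAlgebraic (IntermediateField.adjoin K (Set.range v)) L := hv.isAlgebraic_field
  have : Algebra.FormallySmooth K L := .of_algebraicIndependent_of_isSeparable hv.1
  exact .comp A K L

theorem exists_derivation_extension (R : Type*) {A L : Type*} [CommRing R] [CommRing A] [Field L]
    [Algebra R A] [Algebra R L] [Algebra A L] [IsScalarTower R A L] [Algebra.FormallySmooth A L]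
    (δ : Derivation R A L) : ∃ D : Derivation R L L, D.compAlgebraMap A = δ := by
  have mapBaseChange_injective : Function.Injective (KaehlerDifferential.mapBaseChange R A L) := by
    rw [injective_iff_map_eq_zero]
    intro x hx
    obtain ⟨y, rfl⟩ := (Algebra.H1Cotangent.exact_δ_mapBaseChange R A L x).1 hx
    rw [Subsingleton.elim y 0, map_zero]
  obtain ⟨r, hr⟩ := LinearMap.exists_leftInverse_of_injective
    (KaehlerDifferential.mapBaseChange R A L) (LinearMap.ker_eq_bot.2 mapBaseChange_injective)
  let φ : L ⊗[A] Ω[A⁄R] →ₗ[L] L := TensorProduct.AlgebraTensorModule.lift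
    (LinearMap.toSpanSingleton L _ δ.liftKaehlerDifferential)
  refine ⟨(φ ∘ₗ r).compDer (KaehlerDifferential.D R L), Derivation.ext fun a => ?_⟩
  have D_eq : KaehlerDifferential.D R L (algebraMap A L a) =
    KaehlerDifferential.mapBaseChange R A L (1 ⊗ₜ KaehlerDifferential.D R A a) := by simp
  have r_eq := LinearMap.congr_fun hr (1 ⊗ₜ KaehlerDifferential.D R A a)
  simp only [LinearMap.comp_apply, LinearMap.id_apply] at r_eq
  change φ (r (KaehlerDifferential.D R L (algebraMap A L a))) = δ a
  rw [D_eq, r_eq]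
  simp [φ]

theorem exists_derivation_ne_zero_of_transcendental {K L : Type*} [Field K] [Field L] [CharZero L]
    [Algebra K L] {y : L} (hy : Transcendental K y) : ∃ D : Derivation K L L, D y ≠ 0 := by
  let : Algebra K[X] L := (aeval y).toAlgebra
  have : IsScalarTower K K[X] L :=
    .of_algebraMap_eq' (by ext x; simp [RingHom.algebraMap_toAlgebra])
  have : FaithfulSMul K[X] L :=
    (faithfulSMul_iff_algebraMap_injective K[X] L).2 (transcendental_iff_injective.1 hy)
  have : Algebra.FormallySmooth K[X] L := formallySmooth_field_of_charZero
  obtain ⟨D, hD⟩ := exists_derivation_extension K (mkDerivation K (1 : L))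
  refine ⟨D, ?_⟩
  have D_X : D (aeval y X) = mkDerivation K (1 : L) X := Derivation.congr_fun hD X
  rw [aeval_X, mkDerivation_X] at D_X
  simp [D_X]

theorem derivation_minpoly_coeff_eq_zero {k K L : Type*} [CommRing k] [Field K] [Field L]
    [Algebra k K] [Algebra k L] [Algebra K L] {d : Derivation k K K} {D : Derivation k L L}
    (hd : ∀ a, D (algebraMap K L a) = algebraMap K L (d a)) {y : L} (hy : IsAlgebraic K y)
    (hD : D y = 0) (i : ℕ) : d ((minpoly K y).coeff i) = 0 := by
  set p := minpoly K y
  let q := PolynomialModule.equivPolynomial (d.mapCoeffs p)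
  have q_coeff (i) : q.coeff i = d (p.coeff i) := rfl
  have q_degree : q.degree < p.degree := by
    rw [degree_eq_natDegree (minpoly.ne_zero hy.isIntegral), degree_lt_iff_coeff_zero]
    intro m hm
    rw [q_coeff]
    obtain rfl | hm := hm.eq_or_lt
    · rw [(minpoly.monic hy.isIntegral).coeff_natDegree, d.map_one_eq_zero]
    · rw [coeff_eq_zero_of_natDegree_lt hm, map_zero]
  have q_aeval : aeval y q = 0 := by
    rw [PolynomialModule.aeval_equivPolynomial]
    simpa [p, hD] using
      (d.apply_aeval_eq' D (Algebra.linearMap K L) (fun a => (hd a).symm) y p).symm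
  have q_eq_zero : q = 0 := by
    by_contra hq
    exact q_degree.not_ge (minpoly.degree_le_of_ne_zero K y hq q_aeval)
  rw [← q_coeff, q_eq_zero, coeff_zero]

theorem isAlgebraic_of_forall_derivation_eq_zero {ι k K L : Type*} [CommRing k] [Field K] [Field L]
    [Algebra k K] [Algebra k L] [Algebra K L] [IsScalarTower k K L] {d : ι → Derivation k K K}
    {D : ι → Derivation k L L} (hd : ∀ i a, D i (algebraMap K L a) = algebraMap K L (d i a))
    (hconst : ∀ a, (∀ i, d i a = 0) → a ∈ (algebraMap k K).range)
    {y : L} (hy : IsAlgebraic K y) (hD : ∀ i, D i y = 0) : IsAlgebraic k y := by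
  have minpoly_lifts : minpoly K y ∈ lifts (algebraMap k K) := (lifts_iff_coeff_lifts _).2 fun n =>
    hconst _ fun i => derivation_minpoly_coeff_eq_zero (hd i) hy (hD i) n
  obtain ⟨p, hp⟩ := minpoly_lifts
  rw [coe_mapRingHom] at hp
  refine ⟨p, fun p_eq_zero => minpoly.ne_zero hy.isIntegral ?_, ?_⟩
  · rw [← hp, p_eq_zero, Polynomial.map_zero]
  · rw [← aeval_map_algebraMap K, hp, minpoly.aeval]

end Derivations

section AnalyticGerms

open Filter Topology

noncomputable instance germAlgebra {ι R A : Type*} [CommSemiring R] [Semiring A] [Algebra R A]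
    (l : Filter ι) : Algebra R (Germ l A) :=
  Algebra.ofModule
    (fun r a b => Germ.inductionOn₂ a b fun f g => congrArg _ (smul_mul_assoc r f g))
    (fun r a b => Germ.inductionOn₂ a b fun f g => congrArg _ (mul_smul_comm r f g))

variable {E E' : Type*} [NormedAddCommGroup E] [NormedSpace ℝ E]
  [NormedAddCommGroup E'] [NormedSpace ℝ E']

variable (E) in
/-- The algebra of germs at `0` of real functions analytic at `0`. -/
def AnalyticGerm : Subalgebra ℝ (Germ (𝓝 (0 : E)) ℝ) where
  carrier := {a | ∃ g : E → ℝ, AnalyticAt ℝ g 0 ∧ (g : Germ (𝓝 (0 : E)) ℝ) = a}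
  mul_mem' := by
    rintro _ _ ⟨g, hg, rfl⟩ ⟨h, hh, rfl⟩
    exact ⟨g * h, hg.mul hh, rfl⟩
  add_mem' := by
    rintro _ _ ⟨g, hg, rfl⟩ ⟨h, hh, rfl⟩
    exact ⟨g + h, hg.add hh, rfl⟩
  algebraMap_mem' c := ⟨fun _ => c • 1, analyticAt_const, rfl⟩

namespace AnalyticGerm

/-- The germ at `0` of a function analytic at `0`. -/
def of (g : E → ℝ) (hg : AnalyticAt ℝ g 0) : AnalyticGerm E := ⟨g, ⟨g, hg, rfl⟩⟩

theorem exists_rep (a : AnalyticGerm E) : ∃ g hg, of g hg = a := by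
  obtain ⟨_, g, hg, rfl⟩ := a
  exact ⟨g, hg, rfl⟩

theorem of_eq_of_iff {g h : E → ℝ} {hg : AnalyticAt ℝ g 0} {hh : AnalyticAt ℝ h 0} :
    of g hg = of h hh ↔ g =ᶠ[𝓝 0] h :=
  Subtype.ext_iff.trans Germ.coe_eq

theorem of_eq_zero_iff {g : E → ℝ} {hg : AnalyticAt ℝ g 0} :
    of g hg = 0 ↔ ∀ᶠ x in 𝓝 0, g x = 0 :=
  of_eq_of_iff (hh := analyticAt_const)

theorem of_mul {g h : E → ℝ} (hg : AnalyticAt ℝ g 0) (hh : AnalyticAt ℝ h 0) :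
    of (g * h) (hg.mul hh) = of g hg * of h hh := rfl

theorem of_add {g h : E → ℝ} (hg : AnalyticAt ℝ g 0) (hh : AnalyticAt ℝ h 0) :
    of (g + h) (hg.add hh) = of g hg + of h hh := rfl

theorem algebraMap_eq_of (c : ℝ) :
    algebraMap ℝ (AnalyticGerm E) c = of (fun _ => c) analyticAt_const :=
  Subtype.ext (congrArg Germ.ofFun (funext fun _ => mul_one c))

theorem isUnit_of {g : E → ℝ} (hg : AnalyticAt ℝ g 0) (h0 : g 0 ≠ 0) : IsUnit (of g hg) := by
  refine .of_mul_eq_one (of g⁻¹ (hg.inv h0)) ?_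
  rw [← of_mul]
  refine of_eq_of_iff (hh := analyticAt_const).2 ?_
  filter_upwards [hg.continuousAt.eventually_ne h0] with x hx using mul_inv_cancel₀ hx

/-- The algebra homomorphism `a ↦ a ∘ π`, for a continuous linear map `π`. -/
def pullback (π : E →L[ℝ] E') : AnalyticGerm E' →ₐ[ℝ] AnalyticGerm E where
  toFun a := ⟨a.1.compTendsto π (π.map_zero ▸ π.continuous.tendsto 0), by
    obtain ⟨g, hg, rfl⟩ := exists_rep a
    exact ⟨g ∘ π, AnalyticAt.comp (by rwa [map_zero]) (π.analyticAt 0), rfl⟩⟩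
  map_one' := rfl
  map_mul' a b := by
    obtain ⟨g, hg, rfl⟩ := exists_rep a
    obtain ⟨h, hh, rfl⟩ := exists_rep b
    rfl
  map_zero' := rfl
  map_add' a b := by
    obtain ⟨g, hg, rfl⟩ := exists_rep a
    obtain ⟨h, hh, rfl⟩ := exists_rep b
    rfl
  commutes' _ := rfl

theorem pullback_of (π : E →L[ℝ] E') {g : E' → ℝ} (hg : AnalyticAt ℝ g 0) :
    pullback π (of g hg) = of (g ∘ π) (hg.comp_of_eq (π.analyticAt 0) π.map_zero) := rfl

theorem pullback_pullback {E'' : Type*} [NormedAddCommGroup E''] [NormedSpace ℝ E'']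
    (π : E →L[ℝ] E') (ρ : E' →L[ℝ] E'') (a : AnalyticGerm E'') :
    pullback π (pullback ρ a) = pullback (ρ ∘L π) a := by
  obtain ⟨g, hg, rfl⟩ := exists_rep a
  rfl

theorem exists_pullback_zero_eq_algebraMap (a : AnalyticGerm E') :
    ∃ c : ℝ, pullback (0 : E →L[ℝ] E') a = algebraMap ℝ (AnalyticGerm E) c := by
  obtain ⟨g, hg, rfl⟩ := exists_rep a
  exact ⟨g 0, (algebraMap_eq_of (g 0)).symm⟩

theorem isUnit_of_pullback_zero_ne_zero {a : AnalyticGerm E'}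
    (ha : pullback (0 : E →L[ℝ] E') a ≠ 0) : IsUnit a := by
  obtain ⟨g, hg, rfl⟩ := exists_rep a
  refine isUnit_of hg fun h0 => ha ?_
  rw [pullback_of]
  exact of_eq_zero_iff.2 (.of_forall fun _ => h0)

theorem aeval_of {g : E → ℝ} (hg : AnalyticAt ℝ g 0) (p : Polynomial ℝ) :
    Polynomial.aeval (of g hg) p =
      of (fun x => p.eval (g x)) ((AnalyticOnNhd.eval_polynomial p _ trivial).comp hg) := by
  induction p using Polynomial.induction_on with
  | C c => simp only [Polynomial.aeval_C, algebraMap_eq_of, Polynomial.eval_C]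
  | add p q hp hq =>
    rw [map_add, hp, hq, ← of_add]
    exact of_eq_of_iff.2 (.of_eq (funext fun x => (Polynomial.eval_add).symm))
  | monomial n c ih =>
    rw [pow_succ, ← mul_assoc, map_mul, ih, Polynomial.aeval_X, ← of_mul]
    exact of_eq_of_iff.2 (.of_eq (funext fun x => by simp [mul_assoc]))

theorem analyticAt_fderiv_apply {g : E → ℝ} (hg : AnalyticAt ℝ g 0) (v : E) :
    AnalyticAt ℝ (fun x => fderiv ℝ g x v) 0 :=
  ((ContinuousLinearMap.apply ℝ ℝ v).analyticAt _).comp hg.fderiv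

/-- The derivation `∂_v` of the algebra of germs. -/
noncomputable def dirDeriv (v : E) : Derivation ℝ (AnalyticGerm E) (AnalyticGerm E) :=
  .mk'
    { toFun a := ⟨a.1.map' (fun g x => fderiv ℝ g x v) fun _ _ h => h.fderiv.fun_comp (· v), by
        obtain ⟨g, hg, rfl⟩ := exists_rep a
        exact ⟨_, analyticAt_fderiv_apply hg v, rfl⟩⟩
      map_add' a b := by
        obtain ⟨g, hg, rfl⟩ := exists_rep a
        obtain ⟨h, hh, rfl⟩ := exists_rep b
        refine of_eq_of_iff (hg := analyticAt_fderiv_apply (hg.add hh) v)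
          (hh := (analyticAt_fderiv_apply hg v).add (analyticAt_fderiv_apply hh v)).2 ?_
        filter_upwards [hg.eventually_analyticAt, hh.eventually_analyticAt] with x hgx hhx
        simp [fderiv_add hgx.differentiableAt hhx.differentiableAt]
      map_smul' c a := by
        obtain ⟨g, hg, rfl⟩ := exists_rep a
        refine of_eq_of_iff (hg := analyticAt_fderiv_apply (hg.const_smul (c := c)) v)
          (hh := (analyticAt_fderiv_apply hg v).const_smul (c := c)).2 ?_
        filter_upwards with x
        simp [fderiv_const_smul_field] }
    fun a b => by
      obtain ⟨g, hg, rfl⟩ := exists_rep a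
      obtain ⟨h, hh, rfl⟩ := exists_rep b
      refine of_eq_of_iff (hg := analyticAt_fderiv_apply (hg.mul hh) v)
        (hh := (hg.mul (analyticAt_fderiv_apply hh v)).add
          (hh.mul (analyticAt_fderiv_apply hg v))).2 ?_
      filter_upwards [hg.eventually_analyticAt, hh.eventually_analyticAt] with x hgx hhx
      simp [fderiv_mul hgx.differentiableAt hhx.differentiableAt]

theorem dirDeriv_of (v : E) {g : E → ℝ} (hg : AnalyticAt ℝ g 0) :
    dirDeriv v (of g hg) = of (fun x => fderiv ℝ g x v) (analyticAt_fderiv_apply hg v) := rfl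

theorem dirDeriv_zero (a : AnalyticGerm E) : dirDeriv (0 : E) a = 0 := by
  obtain ⟨g, hg, rfl⟩ := exists_rep a
  exact of_eq_of_iff (hg := analyticAt_fderiv_apply hg 0) (hh := analyticAt_const).2
    (.of_eq (funext fun x => map_zero _))

theorem dirDeriv_pullback (π : E →L[ℝ] E') (v : E) (a : AnalyticGerm E') :
    dirDeriv v (pullback π a) = pullback π (dirDeriv (π v) a) := by
  obtain ⟨g, hg, rfl⟩ := exists_rep a
  refine of_eq_of_iff (hg := analyticAt_fderiv_apply
    (hg.comp_of_eq (π.analyticAt 0) π.map_zero) v)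
    (hh := (analyticAt_fderiv_apply hg (π v)).comp_of_eq (π.analyticAt 0) π.map_zero).2 ?_
  have hπ : Tendsto π (𝓝 0) (𝓝 0) := π.map_zero ▸ π.continuous.tendsto 0
  filter_upwards [hπ.eventually hg.eventually_analyticAt] with x hx
  simp [fderiv_comp x hx.differentiableAt π.differentiableAt]

/-- The germ at `0` of a continuous linear form. -/
def coord (ℓ : E →L[ℝ] ℝ) : AnalyticGerm E := of ℓ (ℓ.analyticAt 0)

theorem pullback_coord (π : E →L[ℝ] E') (ℓ : E' →L[ℝ] ℝ) :
    pullback π (coord ℓ) = coord (ℓ ∘L π) := rfl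

theorem transcendental_coord_id : Transcendental ℝ (coord (.id ℝ ℝ)) := by
  refine transcendental_iff.2 fun p hp => Polynomial.eq_zero_of_infinite_isRoot _ ?_
  rw [coord, aeval_of, of_eq_zero_iff] at hp
  exact infinite_of_mem_nhds (0 : ℝ) hp

theorem dirDeriv_coord (ℓ : E →L[ℝ] ℝ) (v : E) :
    dirDeriv v (coord ℓ) = algebraMap ℝ (AnalyticGerm E) (ℓ v) := by
  rw [coord, dirDeriv_of, algebraMap_eq_of]
  simp only [ContinuousLinearMap.fderiv]

end AnalyticGerm

end AnalyticGerms

section UniqueContinuation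

open Filter Topology

variable {E : Type*} [NormedAddCommGroup E] [NormedSpace ℝ E] {u w : E → ℝ} {s : Set E}

theorem eqOn_const_mul_of_smul_fderiv_eq (hs : IsOpen s) (hs' : Convex ℝ s)
    (hu : DifferentiableOn ℝ u s) (hw : DifferentiableOn ℝ w s) (hw0 : ∀ x ∈ s, w x ≠ 0)
    (h : ∀ x ∈ s, w x • fderiv ℝ u x = u x • fderiv ℝ w x) {a : E} (ha : a ∈ s) :
    Set.EqOn u (fun x => u a / w a * w x) s := by
  have hasFDerivAt_quotient (x : E) (hx : x ∈ s) :
      HasFDerivAt (fun x => u x * (w x)⁻¹) (0 : E →L[ℝ] ℝ) x := by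
    have hux := (hu.differentiableAt (hs.mem_nhds hx)).hasFDerivAt
    have hwx := (hw.differentiableAt (hs.mem_nhds hx)).hasFDerivAt
    refine (hux.mul ((hasDerivAt_inv (hw0 x hx)).comp_hasFDerivAt x hwx)).congr_fderiv ?_
    have hwx_ne := hw0 x hx
    ext v
    have h_v : w x * fderiv ℝ u x v = u x * fderiv ℝ w x v := DFunLike.congr_fun (h x hx) v
    simp only [Function.comp_apply, add_apply, smul_apply, zero_apply, smul_eq_mul]
    field_simp
    linarith
  intro x hx
  have quotient_eq : u x * (w x)⁻¹ = u a * (w a)⁻¹ :=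
    hs'.is_const_of_fderivWithin_eq_zero (𝕜 := ℝ)
      (fun x hx => (hasFDerivAt_quotient x hx).differentiableAt.differentiableWithinAt)
      (fun x hx => by rw [fderivWithin_of_isOpen hs hx, (hasFDerivAt_quotient x hx).fderiv]) hx ha
  change u x = u a * (w a)⁻¹ * w x
  rw [← quotient_eq, inv_mul_cancel_right₀ (hw0 x hx)]

theorem exists_eventuallyEq_const_mul_of_smul_fderiv_eq {x₀ : E} (hu : AnalyticAt ℝ u x₀)
    (hw : AnalyticAt ℝ w x₀) (hw0 : ¬ ∀ᶠ x in 𝓝 x₀, w x = 0)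
    (h : ∀ᶠ x in 𝓝 x₀, w x • fderiv ℝ u x = u x • fderiv ℝ w x) :
    ∃ c : ℝ, u =ᶠ[𝓝 x₀] fun x => c * w x := by
  obtain ⟨r, hr, hball⟩ := Metric.eventually_nhds_iff_ball.1
    ((h.and hu.eventually_analyticAt).and hw.eventually_analyticAt)
  obtain ⟨a, hwa, ha⟩ :=
    ((not_eventually.1 hw0).and_eventually (Metric.ball_mem_nhds x₀ hr)).exists
  obtain ⟨s, hs, hsball⟩ := Metric.eventually_nhds_iff_ball.1
    (((hball a ha).2.continuousAt.eventually_ne hwa).and (Metric.isOpen_ball.mem_nhds ha))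
  refine ⟨u a / w a, ?_⟩
  have eqOn_small : Set.EqOn u (fun x => u a / w a * w x) (Metric.ball a s) :=
    eqOn_const_mul_of_smul_fderiv_eq Metric.isOpen_ball (convex_ball a s)
      (fun x hx => (hball x (hsball x hx).2).1.2.differentiableAt.differentiableWithinAt)
      (fun x hx => (hball x (hsball x hx).2).2.differentiableAt.differentiableWithinAt)
      (fun x hx => (hsball x hx).1) (fun x hx => (hball x (hsball x hx).2).1.1)
      (Metric.mem_ball_self hs)
  have eqOn_large : Set.EqOn u (fun x => u a / w a * w x) (Metric.ball x₀ r) :=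
    AnalyticOnNhd.eqOn_of_preconnected_of_eventuallyEq (𝕜 := ℝ) (z₀ := a)
      (fun x hx => (hball x hx).1.2) (fun x hx => analyticAt_const.mul (hball x hx).2)
      (convex_ball _ _).isPreconnected ha
      (eqOn_small.eventuallyEq_of_mem (Metric.ball_mem_nhds a hs))
  exact eqOn_large.eventuallyEq_of_mem (Metric.ball_mem_nhds x₀ hr)

theorem eventually_eq_zero_of_forall_line {h : E → ℝ} (hh : AnalyticAt ℝ h 0)
    (hline : ∀ e : E, ∀ᶠ t : ℝ in 𝓝 0, h (t • e) = 0) : ∀ᶠ x in 𝓝 (0 : E), h x = 0 := by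
  obtain ⟨r, hr, hball⟩ := Metric.eventually_nhds_iff_ball.1 hh.eventually_analyticAt
  filter_upwards [Metric.ball_mem_nhds (0 : E) hr] with x hx
  let ψ : ℝ →L[ℝ] E := .toSpanSingleton ℝ x
  have eqOn_line : Set.EqOn (h ∘ ψ) 0 (ψ ⁻¹' Metric.ball 0 r) :=
    AnalyticOnNhd.eqOn_of_preconnected_of_eventuallyEq (𝕜 := ℝ) (z₀ := 0)
      (fun t ht => (hball _ ht).comp (ψ.analyticAt t)) (fun _ _ => analyticAt_const)
      ((convex_ball _ _).linear_preimage ψ.toLinearMap).isPreconnected (by simp [hr]) (hline x)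
  simpa [ψ] using eqOn_line (x := 1) (by simpa [ψ] using hx)

end UniqueContinuation

namespace AnalyticGerm

open Filter Topology

variable {E : Type*} [NormedAddCommGroup E] [NormedSpace ℝ E]

theorem exists_eq_smul_of_mul_dirDeriv_eq [FiniteDimensional ℝ E] {u w : AnalyticGerm E}
    (hw : w ≠ 0) (h : ∀ v, w * dirDeriv v u = u * dirDeriv v w) : ∃ c : ℝ, u = c • w := by
  obtain ⟨u, hu, rfl⟩ := exists_rep u
  obtain ⟨w, hw_an, rfl⟩ := exists_rep w
  let b := Module.finBasis ℝ E
  have h_basis : ∀ᶠ x in 𝓝 (0 : E), ∀ i, w x * fderiv ℝ u x (b i) = u x * fderiv ℝ w x (b i) :=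
    eventually_all.2 fun i => of_eq_of_iff (hg := hw_an.mul (analyticAt_fderiv_apply hu (b i)))
      (hh := hu.mul (analyticAt_fderiv_apply hw_an (b i))).1 (h (b i))
  have h_fderiv : ∀ᶠ x in 𝓝 (0 : E), w x • fderiv ℝ u x = u x • fderiv ℝ w x :=
    h_basis.mono fun x hx => ContinuousLinearMap.coe_injective (b.ext hx)
  obtain ⟨c, hc⟩ := exists_eventuallyEq_const_mul_of_smul_fderiv_eq hu hw_an
    (of_eq_zero_iff.not.1 hw) h_fderiv
  exact ⟨c, of_eq_of_iff (hh := hw_an.const_smul (c := c)).2 hc⟩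

theorem exists_line_ne_zero {h : AnalyticGerm E} (hh : h ≠ 0) :
    ∃ e : E, pullback (.toSpanSingleton ℝ e) h ≠ 0 := by
  obtain ⟨h, hh_an, rfl⟩ := exists_rep h
  contrapose! hh
  refine of_eq_zero_iff.2 (eventually_eq_zero_of_forall_line hh_an fun e => ?_)
  have h_line := hh e
  rw [pullback_of, of_eq_zero_iff] at h_line
  simpa using h_line

end AnalyticGerm

section SliceExpansion

open Filter Topology NNReal ENNReal

theorem hasFPowerSeriesOnBall_tsum {ι E Y : Type*} [NormedAddCommGroup E] [NormedSpace ℝ E]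
    [NormedAddCommGroup Y] [NormedSpace ℝ Y] [CompleteSpace Y] {f : ι → E → Y}
    {q : ι → FormalMultilinearSeries ℝ E Y} {x : E} {r : ℝ≥0} (hr : 0 < r)
    (hf : ∀ k, HasFPowerSeriesOnBall (f k) (q k) x r)
    (hq : Summable fun kl : ι × ℕ => ‖q kl.1 kl.2‖ * (r : ℝ) ^ kl.2) :
    HasFPowerSeriesOnBall (fun y => ∑' k, f k y) (fun l => ∑' k, q k l) x r := by
  have hr' : (0 : ℝ) < r := NNReal.coe_pos.2 hr
  have summable_coeff (l : ℕ) : Summable fun k => ‖q k l‖ :=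
    (summable_mul_right_iff (pow_pos hr' l).ne').1 (hq.prod_symm.prod_factor l)
  refine ⟨FormalMultilinearSeries.le_radius_of_summable_norm _ ?_, ENNReal.coe_pos.2 hr,
    fun {y} hy => ?_⟩
  · refine .of_nonneg_of_le (fun l => by positivity) (fun l => ?_) hq.prod_symm.prod
    refine (mul_le_mul_of_nonneg_right (norm_tsum_le_tsum_norm (summable_coeff l))
      (by positivity)).trans_eq ?_
    exact tsum_mul_right.symm
  · have term_norm_le (kl : ι × ℕ) : ‖q kl.1 kl.2 fun _ => y‖ ≤ ‖q kl.1 kl.2‖ * (r : ℝ) ^ kl.2 := by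
      have norm_y_le : ‖y‖ ≤ r := by simpa [← coe_nnnorm] using (mem_eball_zero_iff.1 hy).le
      refine ((q kl.1 kl.2).le_opNorm _).trans ?_
      rw [Fin.prod_const]
      gcongr
    have double_sum := (Summable.of_norm_bounded hq term_norm_le).hasSum
    rw [(double_sum.prod_fiberwise fun k => (hf k).hasSum hy).tsum_eq]
    refine ((Equiv.prodComm ℕ ι).hasSum_iff.2 double_sum).prod_fiberwise fun l => ?_
    exact (Summable.of_norm (summable_coeff l)).hasSum.mapL
      (ContinuousMultilinearMap.apply ℝ (fun _ : Fin l => E) Y fun _ => y)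

variable {E : Type*} [NormedAddCommGroup E] [NormedSpace ℝ E]
  {p : FormalMultilinearSeries ℝ E ℝ} {e : E} {r : ℝ≥0}

theorem summable_norm_changeOriginSeries_mul_pow (hr : (r + r : ℝ≥0∞) < p.radius) :
    Summable fun kl : ℕ × ℕ => ‖p.changeOriginSeries kl.1 kl.2‖ * (r : ℝ) ^ kl.2 * r ^ kl.1 := by
  have summable_triple : Summable fun s : (kl : (_ : ℕ) × ℕ) ×
      { s : Finset (Fin (kl.1 + kl.2)) // s.card = kl.2 } =>
      ‖p (s.1.1 + s.1.2)‖₊ * r ^ s.1.2 * r ^ s.1.1 :=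
    (Equiv.sigmaAssoc fun k l : ℕ =>
      { s : Finset (Fin (k + l)) // s.card = l }).summable_iff.2
        (p.changeOriginSeries_summable_aux₁ hr)
  have summable_sigma : Summable fun kl : (_ : ℕ) × ℕ =>
      ‖p.changeOriginSeries kl.1 kl.2‖₊ * r ^ kl.2 * r ^ kl.1 := by
    refine NNReal.summable_of_le (fun kl => ?_) (NNReal.summable_sigma.1 summable_triple).2
    dsimp only
    rw [NNReal.tsum_mul_right, NNReal.tsum_mul_right]
    gcongr
    exact p.nnnorm_changeOriginSeries_le_tsum _ _
  exact NNReal.summable_coe.2 ((Equiv.sigmaEquivProd ℕ ℕ).symm.summable_iff.2 summable_sigma)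

/-- The `k`-th Taylor coefficient, at the point `x` and in the direction `e`, of the function with
power series `p` at `0`. -/
noncomputable def sliceCoeff (p : FormalMultilinearSeries ℝ E ℝ) (e x : E) (k : ℕ) : ℝ :=
  p.changeOrigin x k fun _ => e

theorem sliceCoeff_smul (s : ℝ) (x : E) (k : ℕ) :
    sliceCoeff p (s • e) x k = s ^ k * sliceCoeff p e x k := by
  simpa [sliceCoeff] using (p.changeOrigin x k).map_smul_univ (fun _ => s) (fun _ => e)

theorem hasSum_sliceCoeff_mul_pow {f : E → ℝ} (hf : HasFPowerSeriesOnBall f p 0 (r + r))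
    (he : ‖e‖ ≤ r) {x : E} (hx : ‖x‖ < r) {t : ℝ} (ht : |t| ≤ 1) :
    HasSum (fun k => sliceCoeff p e x k * t ^ k) (f (x + t • e)) := by
  have he' : ‖e‖₊ ≤ r := he
  have hx' : ‖x‖₊ < r := hx
  have norm_te_le : ‖t • e‖₊ ≤ r := by
    rw [nnnorm_smul]
    exact (mul_le_of_le_one_left' (by simpa [← NNReal.coe_le_coe] using ht)).trans he'
  have norm_add_lt : (‖x‖₊ + ‖t • e‖₊ : ℝ≥0∞) < r + r := by
    exact_mod_cast add_lt_add_of_lt_of_le hx' norm_te_le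
  have expansion := (hf.changeOrigin (y := x) (lt_of_le_of_lt le_self_add norm_add_lt)).hasSum
    (y := t • e) (by simpa [Metric.mem_eball, lt_tsub_iff_left, enorm] using norm_add_lt)
  rw [zero_add] at expansion
  refine expansion.congr_fun fun k => ?_
  exact (mul_comm _ _).trans (sliceCoeff_smul t x k).symm

theorem analyticAt_tsum_sliceCoeff_smul {Y : Type*} [NormedAddCommGroup Y] [NormedSpace ℝ Y]
    [CompleteSpace Y] (hr0 : 0 < r) (hr : (r + r : ℝ≥0∞) < p.radius) (he : ‖e‖ ≤ r) {m : ℕ → Y}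
    (hm : ∀ k, ‖m k‖ ≤ 1) : AnalyticAt ℝ (fun x => ∑' k, sliceCoeff p e x k • m k) 0 := by
  let T (k : ℕ) : (E [×k]→L[ℝ] ℝ) →L[ℝ] Y := .toSpanSingleton ℝ (m k) ∘L
    ContinuousMultilinearMap.apply ℝ (fun _ : Fin k => E) ℝ fun _ => e
  have norm_T_le (k : ℕ) : ‖T k‖ ≤ (r : ℝ) ^ k := by
    refine ContinuousLinearMap.opNorm_le_bound _ (by positivity) fun A => ?_
    calc ‖T k A‖ = ‖A fun _ => e‖ * ‖m k‖ := norm_smul _ _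
      _ ≤ ‖A‖ * ‖e‖ ^ k * 1 := by
        gcongr
        · simpa using A.le_opNorm fun _ => e
        · exact hm k
      _ ≤ (r : ℝ) ^ k * ‖A‖ := by
        rw [mul_one, mul_comm]
        gcongr
  refine (hasFPowerSeriesOnBall_tsum hr0 (fun k => (T k).comp_hasFPowerSeriesOnBall
    ((p.hasFPowerSeriesOnBall_changeOrigin k (pos_of_gt hr)).mono (ENNReal.coe_pos.2 hr0)
      (le_self_add.trans hr.le))) ?_).analyticAt
  refine .of_nonneg_of_le (fun kl => by positivity) (fun kl => ?_)
    (summable_norm_changeOriginSeries_mul_pow hr)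
  calc _ ≤ ‖T kl.1‖ * ‖p.changeOriginSeries kl.1 kl.2‖ * (r : ℝ) ^ kl.2 := by
        gcongr
        exact (T kl.1).norm_compContinuousMultilinearMap_le _
    _ ≤ (r : ℝ) ^ kl.1 * ‖p.changeOriginSeries kl.1 kl.2‖ * (r : ℝ) ^ kl.2 := by
        gcongr
        exact norm_T_le _
    _ = _ := by ring

end SliceExpansion

section ShiftOperators

open scoped BoundedContinuousFunction

/-- The Banach space of bounded real sequences, read as coefficients of power series. It is a type
of its own, and not a synonym for `ℕ →ᵇ ℝ`, so that all its structure comes from one normed space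
instance, which keeps unification in spaces of operators on it cheap. -/
def CoeffSpace : Type := ℕ →ᵇ ℝ

namespace CoeffSpace

noncomputable instance : NormedAddCommGroup CoeffSpace :=
  inferInstanceAs (NormedAddCommGroup (ℕ →ᵇ ℝ))

noncomputable instance : NormedSpace ℝ CoeffSpace := inferInstanceAs (NormedSpace ℝ (ℕ →ᵇ ℝ))

instance : CompleteSpace CoeffSpace := inferInstanceAs (CompleteSpace (ℕ →ᵇ ℝ))

instance : Nontrivial CoeffSpace := NormOneClass.nontrivial (G := ℕ →ᵇ ℝ)

/-- The constant term of a power series. -/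
noncomputable def constTerm : CoeffSpace →L[ℝ] ℝ :=
  BoundedContinuousFunction.evalCLM (α := ℕ) (β := ℝ) ℝ 0

/-- The operator `(a₀, a₁, …) ↦ (a₁, a₂, …)`, which subtracts the constant term of a power series
and divides by the variable. -/
noncomputable def leftShift : CoeffSpace →L[ℝ] CoeffSpace :=
  BoundedContinuousFunction.compContinuousCLM (α := ℕ) ℝ ℝ
    ⟨Nat.succ, continuous_of_discreteTopology⟩

theorem norm_cons_zero_le (a : ℕ →ᵇ ℝ) (n : ℕ) : ‖(n.casesOn 0 a : ℝ)‖ ≤ ‖a‖ := by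
  cases n with
  | zero => exact norm_zero.trans_le (norm_nonneg a)
  | succ n => exact a.norm_coe_le_norm n

/-- The operator `(a₀, a₁, …) ↦ (0, a₀, a₁, …)`, which multiplies a power series by the variable. -/
noncomputable def rightShift : CoeffSpace →L[ℝ] CoeffSpace :=
  LinearMap.mkContinuous (E := ℕ →ᵇ ℝ) (F := ℕ →ᵇ ℝ)
    { toFun a := .ofNormedAddCommGroupDiscrete (fun n => n.casesOn 0 a) ‖a‖ (norm_cons_zero_le a)
      map_add' a b := by ext (_ | n); exacts [(add_zero 0).symm, rfl]
      map_smul' s a := by ext (_ | n); exacts [(smul_zero s).symm, rfl] }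
    1 fun a => by
      rw [one_mul]
      exact BoundedContinuousFunction.norm_ofNormedAddCommGroup_le _ (norm_nonneg a)
        (norm_cons_zero_le a)

/-- The constant sequence `(1, 1, 1, …)`. -/
noncomputable def ones : CoeffSpace := (1 : ℕ →ᵇ ℝ)

/-- The sequence `(1, 0, 0, …)`, which stands for the constant power series `1`. -/
noncomputable def oneSeries : CoeffSpace := ones - rightShift ones

theorem constTerm_rightShift (a : CoeffSpace) : constTerm (rightShift a) = 0 := rfl

theorem leftShift_rightShift (a : CoeffSpace) : leftShift (rightShift a) = a := rfl

theorem constTerm_oneSeries : constTerm oneSeries = 1 := sub_zero (1 : ℝ)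

theorem leftShift_oneSeries : leftShift oneSeries = 0 := by
  rw [oneSeries, map_sub, leftShift_rightShift]
  exact sub_self _

theorem norm_leftShift_le_one : ‖leftShift‖ ≤ 1 :=
  leftShift.opNorm_le_bound zero_le_one fun (a : ℕ →ᵇ ℝ) => by
    rw [one_mul]
    exact (BoundedContinuousFunction.norm_le (norm_nonneg a)).2 fun n =>
      a.norm_coe_le_norm (n + 1)

theorem norm_rightShift_le_one : ‖rightShift‖ ≤ 1 := LinearMap.mkContinuous_norm_le _ zero_le_one _

theorem norm_rightShift_pow_le_one (k : ℕ) : ‖rightShift ^ k‖ ≤ 1 :=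
  (norm_pow_le _ k).trans (pow_le_one₀ (norm_nonneg _) norm_rightShift_le_one)

theorem leftShift_pow_mul_rightShift_pow_add (d k : ℕ) :
    leftShift ^ d * rightShift ^ (d + k) = rightShift ^ k := by
  have leftShift_mul_rightShift : leftShift * rightShift = 1 := rfl
  induction d with
  | zero => simp
  | succ d ih =>
    rw [add_right_comm, pow_succ, pow_succ', mul_assoc, ← mul_assoc leftShift,
      leftShift_mul_rightShift, one_mul, ih]

/-- The value `∑ aₙ τⁿ` at `τ` of the power series with coefficients `a`, for `|τ| < 1`, written as
the zeroth coordinate of the Neumann series of `τ • leftShift`, so that it is visibly analytic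
in `τ`. -/
noncomputable def evalSeries (τ : ℝ) : CoeffSpace →L[ℝ] ℝ :=
  constTerm ∘L Ring.inverse (1 - τ • leftShift)

theorem isUnit_one_sub_smul_leftShift {τ : ℝ} (hτ : |τ| < 1) : IsUnit (1 - τ • leftShift) :=
  isUnit_one_sub_of_norm_lt_one <| by
    rw [norm_smul, Real.norm_eq_abs]
    exact (mul_le_of_le_one_right (abs_nonneg τ) norm_leftShift_le_one).trans_lt hτ

theorem analyticAt_ringInverse {A : Type*} [NormedRing A] [NormedAlgebra ℝ A]
    [HasSummableGeomSeries A] {a : A} (ha : IsUnit a) : AnalyticAt ℝ Ring.inverse a := by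
  obtain ⟨u, rfl⟩ := ha
  exact analyticAt_inverse u

theorem analyticAt_evalSeries_zero : AnalyticAt ℝ evalSeries 0 := by
  have analyticAt_inverse : AnalyticAt ℝ (fun τ : ℝ => Ring.inverse (1 - τ • leftShift)) 0 :=
    (analyticAt_ringInverse (isUnit_one_sub_smul_leftShift (by simp))).comp
      (f := fun τ : ℝ => 1 - τ • leftShift) (by fun_prop)
  exact ((ContinuousLinearMap.compL ℝ _ _ ℝ constTerm).analyticAt _).comp analyticAt_inverse

section
variable {τ : ℝ} (hτ : |τ| < 1)
include hτ

theorem evalSeries_eq_add_leftShift (a : CoeffSpace) :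
    evalSeries τ a = constTerm a + τ * evalSeries τ (leftShift a) := by
  have evalSeries_sub : evalSeries τ ((1 - τ • leftShift) a) = constTerm a :=
    congrArg (fun T : CoeffSpace →L[ℝ] CoeffSpace => constTerm (T a))
      (Ring.inverse_mul_cancel _ (isUnit_one_sub_smul_leftShift hτ))
  have sub_apply : (1 - τ • leftShift) a = a - τ • leftShift a := rfl
  rw [sub_apply, map_sub, map_smul, smul_eq_mul] at evalSeries_sub
  linarith

theorem evalSeries_oneSeries : evalSeries τ oneSeries = 1 := by
  rw [evalSeries_eq_add_leftShift hτ, leftShift_oneSeries, map_zero, mul_zero, add_zero,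
    constTerm_oneSeries]

theorem evalSeries_rightShift_pow (k : ℕ) (a : CoeffSpace) :
    evalSeries τ ((rightShift ^ k) a) = τ ^ k * evalSeries τ a := by
  induction k with
  | zero => simp
  | succ k ih =>
    rw [pow_succ', mul_apply_eq_comp, evalSeries_eq_add_leftShift hτ,
      leftShift_rightShift, ih, constTerm_rightShift]
    ring

theorem evalSeries_eq_sum_add (d : ℕ) (a : CoeffSpace) :
    evalSeries τ a = ∑ k ∈ Finset.range d, constTerm ((leftShift ^ k) a) * τ ^ k +
      τ ^ d * evalSeries τ ((leftShift ^ d) a) := by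
  induction d with
  | zero => simp
  | succ d ih =>
    rw [ih, Finset.sum_range_succ, evalSeries_eq_add_leftShift hτ ((leftShift ^ d) a),
      pow_succ' leftShift d, mul_apply_eq_comp]
    ring

end

/-- Multiplication by the power series with coefficients `c`, as an operator on bounded sequences.
It has the junk value `0` when the series does not converge. -/
noncomputable def mulSeries (c : ℕ → ℝ) : CoeffSpace →L[ℝ] CoeffSpace := ∑' k, c k • rightShift ^ k

section
variable {c : ℕ → ℝ} (hc : Summable fun k => |c k|)
include hc

theorem hasSum_mulSeries : HasSum (fun k => c k • rightShift ^ k) (mulSeries c) :=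
  (Summable.of_norm_bounded hc fun k => by
    rw [norm_smul, Real.norm_eq_abs]
    exact mul_le_of_le_one_right (abs_nonneg _) (norm_rightShift_pow_le_one k)).hasSum

theorem evalSeries_mulSeries {τ s : ℝ} (hτ : |τ| < 1) (hs : HasSum (fun k => c k * τ ^ k) s)
    (a : CoeffSpace) : evalSeries τ (mulSeries c a) = s * evalSeries τ a := by
  refine ((hasSum_mulSeries hc).mapL (evalSeries τ ∘L .apply ℝ _ a)).unique
    ((hs.mul_right (evalSeries τ a)).congr_fun fun k => ?_)
  change evalSeries τ (c k • (rightShift ^ k) a) = _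
  rw [map_smul, smul_eq_mul, evalSeries_rightShift_pow hτ, mul_assoc]

theorem leftShift_pow_mul_mulSeries {d : ℕ} (hd : ∀ k < d, c k = 0) :
    leftShift ^ d * mulSeries c = mulSeries fun k => c (k + d) := by
  have sum_eq_zero : ∑ k ∈ Finset.range d, leftShift ^ d * c k • rightShift ^ k = 0 :=
    Finset.sum_eq_zero fun k hk => by
      rw [hd k (Finset.mem_range.1 hk), zero_smul, mul_zero]
  have hasSum_tail := (hasSum_nat_add_iff' d).2 ((hasSum_mulSeries hc).mul_left (leftShift ^ d))
  rw [sum_eq_zero, sub_zero] at hasSum_tail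
  refine hasSum_tail.tsum_eq.symm.trans (tsum_congr fun k => ?_)
  rw [mul_smul_comm, add_comm k, leftShift_pow_mul_rightShift_pow_add, add_comm d]

theorem isUnit_mulSeries (hc0 : ∑' k, |c (k + 1)| < |c 0|) : IsUnit (mulSeries c) := by
  have c0_ne_zero : c 0 ≠ 0 := abs_pos.1 ((tsum_nonneg fun k => abs_nonneg _).trans_lt hc0)
  have hasSum_tail := (hasSum_nat_add_iff' 1).2 (hasSum_mulSeries hc)
  have norm_tail_le : ‖mulSeries c - c 0 • 1‖ ≤ ∑' k, |c (k + 1)| := by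
    rw [Finset.sum_range_one, pow_zero] at hasSum_tail
    rw [← hasSum_tail.tsum_eq]
    exact tsum_of_norm_bounded ((summable_nat_add_iff 1).2 hc).hasSum fun k => by
      rw [norm_smul, Real.norm_eq_abs]
      exact mul_le_of_le_one_right (abs_nonneg _) (norm_rightShift_pow_le_one _)
  have norm_lt_one : ‖(c 0)⁻¹ • (c 0 • 1 - mulSeries c)‖ < 1 := by
    rw [norm_smul, norm_inv, Real.norm_eq_abs, norm_sub_rev, inv_mul_lt_iff₀ (by positivity),
      mul_one]
    exact norm_tail_le.trans_lt hc0
  have mulSeries_eq : mulSeries c = Units.mk0 (c 0) c0_ne_zero •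
      (1 - (c 0)⁻¹ • (c 0 • 1 - mulSeries c)) := by
    rw [Units.smul_mk0, smul_sub, smul_inv_smul₀ c0_ne_zero, sub_sub_cancel]
  rw [mulSeries_eq]
  exact (isUnit_smul_iff _ _).2 (isUnit_one_sub_of_norm_lt_one norm_lt_one)

end

end CoeffSpace

end ShiftOperators

section WeierstrassDivision

open Filter Topology CoeffSpace
open scoped NNReal ENNReal

theorem analyticAt_clm_apply {E F G : Type*} [NormedAddCommGroup E] [NormedSpace ℝ E]
    [NormedAddCommGroup F] [NormedSpace ℝ F] [NormedAddCommGroup G] [NormedSpace ℝ G]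
    {A : E → F →L[ℝ] G} {b : E → F} {x : E} (hA : AnalyticAt ℝ A x) (hb : AnalyticAt ℝ b x) :
    AnalyticAt ℝ (fun y => A y (b y)) x :=
  ((ContinuousLinearMap.id ℝ (F →L[ℝ] G)).analyticAt_bilinear (A x, b x)).comp₂ hA hb

theorem exists_analyticAt_eq_add_of_isUnit_mul {E X : Type*} [NormedAddCommGroup E]
    [NormedSpace ℝ E] [NormedAddCommGroup X] [NormedSpace ℝ X] [CompleteSpace X]
    {T : X →L[ℝ] X} {H : E → X →L[ℝ] X} {b : E → X} {x : E} (hH : AnalyticAt ℝ H x)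
    (hb : AnalyticAt ℝ b x) (hunit : IsUnit (T * H x)) :
    ∃ Q w : E → X, AnalyticAt ℝ Q x ∧ AnalyticAt ℝ w x ∧
      ∀ᶠ y in 𝓝 x, b y = H y (Q y) + w y ∧ T (w y) = 0 := by
  have analyticAt_mul : AnalyticAt ℝ (fun y => T * H y) x := analyticAt_const.mul hH
  have analyticAt_quotient : AnalyticAt ℝ (fun y => Ring.inverse (T * H y) (T (b y))) x :=
    analyticAt_clm_apply ((analyticAt_ringInverse hunit).comp (f := fun y => T * H y)
      analyticAt_mul) ((T.analyticAt _).comp hb)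
  refine ⟨_, _, analyticAt_quotient, hb.sub (analyticAt_clm_apply hH analyticAt_quotient), ?_⟩
  filter_upwards [analyticAt_mul.continuousAt.eventually (Units.isOpen.mem_nhds hunit)] with y hy
  have T_mul_quotient : T (H y (Ring.inverse (T * H y) (T (b y)))) = T (b y) :=
    congrArg (fun A : X →L[ℝ] X => A (T (b y))) (Ring.mul_inverse_cancel _ hy)
  exact ⟨(add_sub_cancel _ _).symm, by simp [T_mul_quotient]⟩

theorem eventually_tsum_abs_pow_mul_lt {c : ℕ → ℝ} {s₀ ε : ℝ} (hs₀ : 0 < s₀)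
    (hc : Summable fun k => |s₀ ^ k * c k|) (hε : 0 < ε) :
    ∀ᶠ s in 𝓝[>] (0 : ℝ), ∑' k, |s ^ (k + 1) * c (k + 1)| < ε := by
  have term_tendsto (k : ℕ) :
      Tendsto (fun s : ℝ => |s ^ (k + 1) * c (k + 1)|) (𝓝[>] 0) (𝓝 0) := by
    have : ContinuousAt (fun s : ℝ => |s ^ (k + 1) * c (k + 1)|) 0 := by fun_prop
    simpa using this.tendsto.mono_left nhdsWithin_le_nhds
  have tsum_tendsto := tendsto_tsum_of_dominated_convergence
    ((summable_nat_add_iff 1).2 hc) term_tendsto <| by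
      filter_upwards [Ioc_mem_nhdsGT hs₀] with s hs k
      change ‖|s ^ (k + 1) * c (k + 1)|‖ ≤ |s₀ ^ (k + 1) * c (k + 1)|
      rw [norm_abs_eq_norm, Real.norm_eq_abs, abs_mul, abs_mul, abs_of_pos (pow_pos hs.1 _),
        abs_of_pos (pow_pos hs₀ _)]
      exact mul_le_mul_of_nonneg_right (pow_le_pow_left₀ hs.1.le hs.2 _) (abs_nonneg _)
  rw [tsum_zero] at tsum_tendsto
  exact tsum_tendsto.eventually_lt_const hε

theorem eventually_tsum_abs_pow_mul_lt_abs_pow_mul {c : ℕ → ℝ} {s₀ : ℝ} (hs₀ : 0 < s₀)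
    (hc : Summable fun k => |s₀ ^ k * c k|) {d : ℕ} (hd : c d ≠ 0) :
    ∀ᶠ s in 𝓝[>] (0 : ℝ), ∑' k, |s ^ (k + 1 + d) * c (k + 1 + d)| < |s ^ d * c d| := by
  have factor {s : ℝ} (hs : 0 < s) (k : ℕ) :
      |s ^ (k + d) * c (k + d)| = s ^ d * |s ^ k * c (k + d)| := by
    rw [pow_add, mul_comm (s ^ k), mul_assoc, abs_mul, abs_of_pos (pow_pos hs d)]
  have summable_tail : Summable fun k => |s₀ ^ k * c (k + d)| :=
    (summable_mul_left_iff (pow_pos hs₀ d).ne').1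
      (((summable_nat_add_iff d).2 hc).congr (factor hs₀))
  filter_upwards [self_mem_nhdsWithin,
    eventually_tsum_abs_pow_mul_lt hs₀ summable_tail (abs_pos.2 hd)] with s hs hsum
  rw [tsum_congr fun k => factor hs (k + 1), tsum_mul_left, abs_mul, abs_of_pos (pow_pos hs d)]
  exact mul_lt_mul_of_pos_left hsum (pow_pos hs d)

variable {E : Type*} [NormedAddCommGroup E] [NormedSpace ℝ E] {e : E}

/-- Near `x = 0`, the function `f` is on the segments `{x + t • e | |t| ≤ 1}` the power series in
`t` with coefficients `c x`, and multiplication by this power series depends analytically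
on `x`. -/
structure IsSliceExpansion (f : E → ℝ) (e : E) (c : E → ℕ → ℝ) : Prop where
  hasSum : ∀ᶠ x in 𝓝 0, ∀ t : ℝ, |t| ≤ 1 → HasSum (fun k => c x k * t ^ k) (f (x + t • e))
  analyticAt : AnalyticAt ℝ (fun x => mulSeries (c x)) 0

namespace IsSliceExpansion

variable {f h u : E → ℝ} {b c : E → ℕ → ℝ}

theorem eventually_summable (hf : IsSliceExpansion f e c) :
    ∀ᶠ x in 𝓝 0, Summable fun k => |c x k| := by
  filter_upwards [hf.hasSum] with x hx
  simpa using (hx 1 (by simp)).summable.abs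

theorem eventually_evalSeries_mulSeries (hf : IsSliceExpansion f e c) :
    ∀ᶠ x in 𝓝 0, ∀ t : ℝ, |t| < 1 → ∀ a,
      evalSeries t (mulSeries (c x) a) = f (x + t • e) * evalSeries t a := by
  filter_upwards [hf.hasSum, hf.eventually_summable] with x hx hcx t ht
  exact evalSeries_mulSeries hcx ht (hx t ht.le)

theorem eventually_eq_zero_of_coeff_eq_zero (hf : IsSliceExpansion f e c) (hc : ∀ k, c 0 k = 0) :
    ∀ᶠ t : ℝ in 𝓝 0, f (t • e) = 0 := by
  filter_upwards [Metric.closedBall_mem_nhds (0 : ℝ) one_pos] with t ht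
  have expansion := hf.hasSum.self_of_nhds t (by simpa using ht)
  simp only [hc, zero_mul, zero_add] at expansion
  exact expansion.unique hasSum_zero

theorem exists_eq_mul_add_sum (hh : IsSliceExpansion h e c) (hu : IsSliceExpansion u e b)
    (ℓ : E →L[ℝ] ℝ) {d : ℕ} (hlow : ∀ k < d, c 0 k = 0)
    (hdom : ∑' k, |c 0 (k + 1 + d)| < |c 0 d|) :
    ∃ (q : E → ℝ) (r : ℕ → E → ℝ), AnalyticAt ℝ q 0 ∧ (∀ k, AnalyticAt ℝ (r k) 0) ∧
      ∀ᶠ y in 𝓝 0, u y = q y * h y + ∑ k ∈ Finset.range d, r k (y - ℓ y • e) * ℓ y ^ k := by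
  have hc0 := hh.eventually_summable.self_of_nhds
  have isUnit : IsUnit (leftShift ^ d * mulSeries (c 0)) := by
    rw [leftShift_pow_mul_mulSeries hc0 hlow]
    exact isUnit_mulSeries ((summable_nat_add_iff d).2 hc0) (by simpa only [zero_add] using hdom)
  obtain ⟨Q, w, hQ, hw, hQw⟩ := exists_analyticAt_eq_add_of_isUnit_mul hh.analyticAt
    (analyticAt_clm_apply hu.analyticAt (analyticAt_const (v := oneSeries))) isUnit
  have analyticAt_proj : AnalyticAt ℝ (fun y => y - ℓ y • e) 0 :=
    analyticAt_id.sub ((ℓ.analyticAt 0).smul analyticAt_const)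
  have tendsto_proj : Tendsto (fun y => y - ℓ y • e) (𝓝 0) (𝓝 0) := by
    simpa using analyticAt_proj.continuousAt.tendsto
  refine ⟨fun y => evalSeries (ℓ y) (Q (y - ℓ y • e)),
    fun k x => constTerm ((leftShift ^ k) (w x)), ?_, fun k => ?_, ?_⟩
  · exact analyticAt_clm_apply
      (AnalyticAt.comp (g := evalSeries) (by simpa using analyticAt_evalSeries_zero)
        (ℓ.analyticAt 0))
      (AnalyticAt.comp (g := Q) (by simpa using hQ) analyticAt_proj)
  · exact ((constTerm ∘L leftShift ^ k).analyticAt _).comp hw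
  have abs_lt_one : ∀ᶠ y in 𝓝 0, |ℓ y| < 1 :=
    (ℓ.continuous.abs.continuousAt (x := 0)).eventually (Iio_mem_nhds (by simp))
  filter_upwards [abs_lt_one, tendsto_proj.eventually hh.eventually_evalSeries_mulSeries,
    tendsto_proj.eventually hu.eventually_evalSeries_mulSeries, tendsto_proj.eventually hQw]
    with y hy eval_h eval_u ⟨decomposition, shift_w⟩
  have evaluated := congrArg (evalSeries (ℓ y)) decomposition
  rwa [map_add, eval_u _ hy, eval_h _ hy, evalSeries_oneSeries hy, sub_add_cancel, mul_one,
    evalSeries_eq_sum_add hy d (w _), shift_w, map_zero, mul_zero, add_zero,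
    mul_comm (h y)] at evaluated

end IsSliceExpansion

theorem exists_isSliceExpansion_smul {f : E → ℝ} (hf : AnalyticAt ℝ f 0) (e : E) :
    ∃ c : E → ℕ → ℝ, ∀ᶠ s in 𝓝[>] (0 : ℝ),
      IsSliceExpansion f (s • e) fun x k => s ^ k * c x k := by
  obtain ⟨p, R, hp⟩ := hf
  obtain ⟨r, hr0, hr⟩ : ∃ r : ℝ≥0, 0 < r ∧ (r + r : ℝ≥0∞) < R := by
    obtain ⟨R', hR', hR'R⟩ := ENNReal.lt_iff_exists_nnreal_btwn.1 hp.r_pos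
    refine ⟨R' / 2, half_pos (ENNReal.coe_pos.1 hR'), ?_⟩
    rwa [← ENNReal.coe_add, add_halves]
  refine ⟨sliceCoeff p e, ?_⟩
  have smul_small : ∀ᶠ s in 𝓝[>] (0 : ℝ), ‖s • e‖ ≤ r := by
    have : ContinuousAt (fun s : ℝ => ‖s • e‖) 0 := by fun_prop
    exact nhdsWithin_le_nhds (this.eventually (Iic_mem_nhds (by simpa using hr0)))
  filter_upwards [smul_small] with s hs
  simp only [← sliceCoeff_smul]
  refine ⟨?_, analyticAt_tsum_sliceCoeff_smul hr0 (hr.trans_le hp.r_le) hs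
    norm_rightShift_pow_le_one⟩
  filter_upwards [Metric.ball_mem_nhds (0 : E) (NNReal.coe_pos.2 hr0)] with x hx t ht
  exact hasSum_sliceCoeff_mul_pow (hp.mono (by positivity) hr.le) hs (by simpa using hx) ht

theorem exists_eq_mul_add_sum_of_analyticAt (ℓ : E →L[ℝ] ℝ) {h : E → ℝ} (hh : AnalyticAt ℝ h 0)
    (hne : ∃ᶠ t : ℝ in 𝓝 0, h (t • e) ≠ 0) :
    ∃ d : ℕ, ∀ u : E → ℝ, AnalyticAt ℝ u 0 →
      ∃ (q : E → ℝ) (r : ℕ → E → ℝ), AnalyticAt ℝ q 0 ∧ (∀ k, AnalyticAt ℝ (r k) 0) ∧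
        ∀ᶠ y in 𝓝 0, u y = q y * h y + ∑ k ∈ Finset.range d, r k (y - ℓ y • e) * ℓ y ^ k := by
  classical
  obtain ⟨c, hc⟩ := exists_isSliceExpansion_smul hh e
  obtain ⟨s₀, hs₀, hcs₀⟩ := (eventually_mem_nhdsWithin.and hc).exists
  rw [Set.mem_Ioi] at hs₀
  have exists_coeff_ne_zero : ∃ k, c 0 k ≠ 0 := by
    by_contra! coeff_eq_zero
    have vanishes := hcs₀.eventually_eq_zero_of_coeff_eq_zero fun k => by simp [coeff_eq_zero]
    have rescale : Tendsto (fun t : ℝ => t * s₀⁻¹) (𝓝 0) (𝓝 0) := by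
      simpa using (continuous_mul_const s₀⁻¹).tendsto 0
    refine hne ((rescale.eventually vanishes).mono fun t ht => not_not.2 ?_)
    rwa [mul_smul, inv_smul_smul₀ hs₀.ne'] at ht
  refine ⟨Nat.find exists_coeff_ne_zero, fun u hu => ?_⟩
  obtain ⟨b, hb⟩ := exists_isSliceExpansion_smul hu e
  obtain ⟨s, hs, hcs, hbs, hdom⟩ := (eventually_mem_nhdsWithin.and (hc.and (hb.and
    (eventually_tsum_abs_pow_mul_lt_abs_pow_mul hs₀ hcs₀.eventually_summable.self_of_nhds
      (Nat.find_spec exists_coeff_ne_zero))))).exists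
  obtain ⟨q, r, hq, hr, hqr⟩ := hcs.exists_eq_mul_add_sum hbs (s⁻¹ • ℓ)
    (fun k hk => by simp [not_not.1 (Nat.find_min exists_coeff_ne_zero hk)]) hdom
  refine ⟨q, fun k x => s⁻¹ ^ k * r k x, hq, fun k => analyticAt_const.mul (hr k), ?_⟩
  filter_upwards [hqr] with y hy
  have smul_eq : (s⁻¹ • ℓ) y • s • e = ℓ y • e := by
    rw [smul_apply, smul_assoc, smul_comm, inv_smul_smul₀ (ne_of_gt hs)]
  rw [hy, smul_eq]
  congr 1
  refine Finset.sum_congr rfl fun k _ => ?_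
  simp [mul_pow]
  ring

end WeierstrassDivision

namespace AnalyticGerm

open Polynomial Filter Topology

variable {E : Type*} [NormedAddCommGroup E] [NormedSpace ℝ E] {ℓ : E →L[ℝ] ℝ} {e : E}

/-- The projection onto the kernel of `ℓ` along the vector `e`, where `ℓ e = 1`. -/
noncomputable def projKer (hℓe : ℓ e = 1) : E →L[ℝ] ℓ.ker :=
  ℓ.projKerOfRightInverse (.toSpanSingleton ℝ e) fun t => by simp [hℓe]

theorem projKer_apply_self (hℓe : ℓ e = 1) : projKer hℓe e = 0 :=
  Subtype.ext (by simp [projKer, hℓe])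

theorem projKer_apply_coe (hℓe : ℓ e = 1) (v : ℓ.ker) : projKer hℓe v = v :=
  ℓ.projKerOfRightInverse_apply_idem _ _ v

theorem of_sum {ι : Type*} (s : Finset ι) {g : ι → E → ℝ} (hg : ∀ i, AnalyticAt ℝ (g i) 0) :
    ∑ i ∈ s, of (g i) (hg i) =
      of (fun y => ∑ i ∈ s, g i y) (s.analyticAt_fun_sum fun i _ => hg i) := by
  refine Subtype.ext ((AddSubmonoidClass.coe_finsetSum ..).trans ?_)
  exact ((map_sum (Germ.coeRingHom (𝓝 (0 : E))) g s).symm.trans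
    (congrArg _ (funext fun y => Finset.sum_apply ..)))

theorem weierstrass_division (hℓe : ℓ e = 1) {h : AnalyticGerm E}
    (hh : pullback (.toSpanSingleton ℝ e) h ≠ 0) :
    ∃ d : ℕ, ∀ u : AnalyticGerm E, ∃ (q : AnalyticGerm E) (r : ℕ → AnalyticGerm ℓ.ker),
      u = q * h + ∑ k ∈ Finset.range d, pullback (projKer hℓe) (r k) * coord ℓ ^ k := by
  obtain ⟨h, h_analytic, rfl⟩ := exists_rep h
  rw [pullback_of, Ne, of_eq_zero_iff] at hh
  obtain ⟨d, hd⟩ := exists_eq_mul_add_sum_of_analyticAt ℓ h_analytic (not_eventually.1 hh)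
  refine ⟨d, fun u => ?_⟩
  obtain ⟨u, u_analytic, rfl⟩ := exists_rep u
  obtain ⟨q, r, q_analytic, r_analytic, hqr⟩ := hd u u_analytic
  have restrict_analytic (k : ℕ) : AnalyticAt ℝ (r k ∘ ℓ.ker.subtypeL) 0 :=
    (r_analytic k).comp_of_eq (ℓ.ker.subtypeL.analyticAt 0) (map_zero _)
  refine ⟨of q q_analytic, fun k => of _ (restrict_analytic k), ?_⟩
  have term_analytic (k : ℕ) : AnalyticAt ℝ (fun y => r k (projKer hℓe y) * ℓ y ^ k) 0 :=
    ((r_analytic k).comp_of_eq (f := fun y => (projKer hℓe y : E))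
      ((ℓ.ker.subtypeL ∘L projKer hℓe).analyticAt 0) (by simp)).mul ((ℓ.analyticAt 0).pow k)
  have term_eq (k : ℕ) : pullback (projKer hℓe) (of _ (restrict_analytic k)) * coord ℓ ^ k =
      of _ (term_analytic k) := rfl
  rw [Finset.sum_congr rfl fun k _ => term_eq k, of_sum, ← of_mul, ← of_add, of_eq_of_iff]
  exact hqr

theorem pullback_line_weierstrass_ne_zero (hℓe : ℓ e = 1) (d : ℕ) (r : ℕ → AnalyticGerm ℓ.ker) :
    pullback (.toSpanSingleton ℝ e)
      (coord ℓ ^ d - ∑ k ∈ Finset.range d, pullback (projKer hℓe) (r k) * coord ℓ ^ k) ≠ 0 := by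
  have projKer_line : projKer hℓe ∘L .toSpanSingleton ℝ e = 0 := by
    ext; simp [projKer_apply_self]
  have coord_line : ℓ ∘L .toSpanSingleton ℝ e = .id ℝ ℝ := by
    ext; simp [hℓe]
  choose c hc using fun k => exists_pullback_zero_eq_algebraMap (E := ℝ) (r k)
  have monic : (X ^ d - ∑ k ∈ Finset.range d, monomial k (c k)).Monic := by
    refine monic_X_pow_sub ((degree_sum_le _ _).trans_lt ?_)
    refine (Finset.sup_lt_iff (WithBot.bot_lt_coe _)).2 fun k hk => ?_
    exact (degree_monomial_le _ _).trans_lt (by exact_mod_cast Finset.mem_range.1 hk)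
  have aeval_ne_zero := fun h => monic.ne_zero (transcendental_iff.1 transcendental_coord_id _ h)
  simpa [pullback_pullback, projKer_line, pullback_coord, coord_line, hc, aeval_monomial]
    using aeval_ne_zero

variable {L : Type*} [Field L] [Algebra ℝ L] [Algebra (AnalyticGerm E) L]

theorem derivation_eq_zero_of_eqOn_projKer (hℓe : ℓ e = 1)
    {Δ : Derivation ℝ (AnalyticGerm E) L} (hΔℓ : Δ (coord ℓ) = 0)
    (hΔπ : ∀ a, Δ (pullback (projKer hℓe) a) = 0) {h : AnalyticGerm E}
    (hh : pullback (.toSpanSingleton ℝ e) h ≠ 0) (hh0 : algebraMap (AnalyticGerm E) L h = 0) :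
    Δ = 0 := by
  have Δ_sum (d : ℕ) (r : ℕ → AnalyticGerm ℓ.ker) :
      Δ (∑ k ∈ Finset.range d, pullback (projKer hℓe) (r k) * coord ℓ ^ k) = 0 := by
    rw [map_sum]
    refine Finset.sum_eq_zero fun k _ => ?_
    rw [Δ.leibniz, Δ.leibniz_pow, hΔℓ, hΔπ]
    simp only [smul_zero, add_zero]
  obtain ⟨d, hdiv⟩ := weierstrass_division hℓe hh
  obtain ⟨q, r, hqr⟩ := hdiv (coord ℓ ^ d)
  -- The Weierstrass polynomial `W` lies in the kernels of both `Δ` and `algebraMap _ L`, so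
  -- division by `W` loses only a term which `Δ` kills.
  set W := coord ℓ ^ d - ∑ k ∈ Finset.range d, pullback (projKer hℓe) (r k) * coord ℓ ^ k
  have ΔW : Δ W = 0 := by rw [map_sub, Δ_sum, Δ.leibniz_pow, hΔℓ]; simp only [smul_zero, sub_zero]
  have W_eq : W = q * h := sub_eq_iff_eq_add.2 hqr
  have W_zero : algebraMap (AnalyticGerm E) L W = 0 := by rw [W_eq, map_mul, hh0, mul_zero]
  obtain ⟨d', hdiv'⟩ := weierstrass_division hℓe (pullback_line_weierstrass_ne_zero hℓe d r)
  ext a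
  obtain ⟨q', r', rfl⟩ := hdiv' a
  rw [map_add, Δ_sum, Δ.leibniz, ΔW, Algebra.smul_def W, W_zero]
  simp only [smul_zero, zero_mul, add_zero, Derivation.coe_zero, Pi.zero_apply]

variable [IsScalarTower ℝ (AnalyticGerm E) L]

theorem transcendental_algebraMap {g : E → ℝ} (hg : AnalyticAt ℝ g 0) (hg0 : g 0 = 0)
    (hne : algebraMap (AnalyticGerm E) L (of g hg) ≠ 0) :
    Transcendental ℝ (algebraMap (AnalyticGerm E) L (of g hg)) := by
  intro halg
  obtain ⟨p, hp0, hp⟩ := halg.exists_nonzero_coeff_and_aeval_eq_zero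
    (mem_nonZeroDivisors_of_ne_zero hne)
  have isUnit_aeval : IsUnit (aeval (of g hg) p) := by
    rw [aeval_of]
    exact isUnit_of _ (by rwa [hg0, ← coeff_zero_eq_eval_zero])
  rw [aeval_algebraMap_apply] at hp
  exact (isUnit_aeval.map (algebraMap (AnalyticGerm E) L)).ne_zero hp

variable (E L) in
/-- The tangent vectors `∑ cᵢ ∂_{vᵢ}`, with `cᵢ ∈ L`, at the `L`-valued point given by the algebra
structure of `L`. They are the derivations which obey the chain rule for analytic functions, and not
only for polynomials. -/
noncomputable def tangentSpace : Submodule L (Derivation ℝ (AnalyticGerm E) L) :=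
  .span L (Set.range fun v => (Algebra.linearMap (AnalyticGerm E) L).compDer (dirDeriv v))

theorem compDer_dirDeriv_mem_tangentSpace (v : E) :
    (Algebra.linearMap (AnalyticGerm E) L).compDer (dirDeriv v) ∈ tangentSpace E L :=
  Submodule.subset_span ⟨v, rfl⟩

theorem apply_eq_sum_of_mem_tangentSpace {ι : Type*} {s : Finset ι}
    {b : AnalyticGerm E} {a : ι → AnalyticGerm E} {c : ι → L}
    (h : ∀ v, algebraMap _ L (dirDeriv v b) = ∑ i ∈ s, c i * algebraMap _ L (dirDeriv v (a i)))
    {δ : Derivation ℝ (AnalyticGerm E) L} (hδ : δ ∈ tangentSpace E L) :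
    δ b = ∑ i ∈ s, c i * δ (a i) := by
  induction hδ using Submodule.span_induction with
  | mem _ hv =>
    obtain ⟨v, rfl⟩ := hv
    exact h v
  | zero => simp
  | add δ₁ δ₂ _ _ h₁ h₂ => simp [h₁, h₂, mul_add, Finset.sum_add_distrib]
  | smul r δ _ h => simp [h, Finset.mul_sum, mul_left_comm]

theorem mem_range_algebraMap_of_forall_derivation_eq_zero [FiniteDimensional ℝ E] {K : Type*}
    [Field K] [Algebra ℝ K] [Algebra (AnalyticGerm E) K] [IsScalarTower ℝ (AnalyticGerm E) K]
    [IsFractionRing (AnalyticGerm E) K] {d : E → Derivation ℝ K K}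
    (hd : ∀ v a, d v (algebraMap _ K a) = algebraMap _ K (dirDeriv v a)) {a : K}
    (ha : ∀ v, d v a = 0) : a ∈ (algebraMap ℝ K).range := by
  obtain ⟨u, w, hw, rfl⟩ := IsFractionRing.div_surjective (A := AnalyticGerm E) a
  have map_w_ne_zero : algebraMap _ K w ≠ 0 :=
    IsFractionRing.to_map_ne_zero_of_mem_nonZeroDivisors hw
  obtain ⟨c, rfl⟩ := exists_eq_smul_of_mul_dirDeriv_eq (u := u) (w := w)
    (fun hw0 => map_w_ne_zero (by rw [hw0, map_zero])) fun v => by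
      have quotient_rule := ha v
      rw [Derivation.leibniz_div, hd, hd, smul_eq_zero,
        or_iff_right (pow_ne_zero 2 (inv_ne_zero map_w_ne_zero))] at quotient_rule
      exact IsFractionRing.injective (AnalyticGerm E) K (by
        simpa [sub_eq_zero] using quotient_rule)
  exact ⟨c, by rw [Algebra.smul_def, map_mul, mul_div_cancel_right₀ _ map_w_ne_zero,
    ← IsScalarTower.algebraMap_apply]⟩

theorem exists_derivation_ne_zero_of_isFractionRing [FiniteDimensional ℝ E] (K : Type*)
    [Field K] [Algebra ℝ K] [Algebra (AnalyticGerm E) K] [IsScalarTower ℝ (AnalyticGerm E) K]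
    [IsFractionRing (AnalyticGerm E) K] [Algebra K L] [IsScalarTower (AnalyticGerm E) K L]
    [IsScalarTower ℝ K L] {y : L} (hy : Transcendental ℝ y) :
    ∃ D : Derivation ℝ L L, D y ≠ 0 ∧ D.compAlgebraMap (AnalyticGerm E) ∈ tangentSpace E L := by
  have : CharZero L := charZero_of_injective_algebraMap (algebraMap ℝ L).injective
  have : CharZero K := charZero_of_injective_algebraMap (algebraMap ℝ K).injective
  have : Algebra.FormallySmooth (AnalyticGerm E) K := .of_isLocalization (nonZeroDivisors _)
  have : Algebra.FormallySmooth K L := formallySmooth_field_of_charZero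
  choose d hd using fun v : E => exists_derivation_extension ℝ
    ((Algebra.linearMap (AnalyticGerm E) K).compDer (dirDeriv v))
  choose D hD using fun v => exists_derivation_extension ℝ ((Algebra.linearMap K L).compDer (d v))
  have d_apply (v : E) (a : AnalyticGerm E) :
      d v (algebraMap _ K a) = algebraMap _ K (dirDeriv v a) :=
    Derivation.congr_fun (hd v) a
  have D_apply (v : E) (a : K) : D v (algebraMap K L a) = algebraMap K L (d v a) :=
    Derivation.congr_fun (hD v) a
  by_cases hDy : ∃ v, D v y ≠ 0
  · obtain ⟨v, hv⟩ := hDy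
    refine ⟨D v, hv, ?_⟩
    convert compDer_dirDeriv_mem_tangentSpace (L := L) v using 1
    ext a
    change D v (algebraMap _ L a) = algebraMap _ L (dirDeriv v a)
    simp only [IsScalarTower.algebraMap_apply (AnalyticGerm E) K L, D_apply, d_apply]
  push Not at hDy
  by_cases hyK : IsAlgebraic K y
  · exact absurd (isAlgebraic_of_forall_derivation_eq_zero D_apply
      (fun a => mem_range_algebraMap_of_forall_derivation_eq_zero d_apply) hyK hDy) hy
  · obtain ⟨D', hD'⟩ := exists_derivation_ne_zero_of_transcendental hyK
    refine ⟨D'.restrictScalars ℝ, hD', ?_⟩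
    convert Submodule.zero_mem _
    ext a
    change D' (algebraMap _ L a) = 0
    rw [IsScalarTower.algebraMap_apply (AnalyticGerm E) K L, D'.map_algebraMap]

theorem exists_derivation_ne_zero_of_injective [FiniteDimensional ℝ E]
    (hinj : Function.Injective (algebraMap (AnalyticGerm E) L)) {y : L} (hy : Transcendental ℝ y) :
    ∃ D : Derivation ℝ L L, D y ≠ 0 ∧ D.compAlgebraMap (AnalyticGerm E) ∈ tangentSpace E L := by
  have : IsDomain (AnalyticGerm E) := hinj.isDomain
  have : FaithfulSMul (AnalyticGerm E) L := (faithfulSMul_iff_algebraMap_injective _ L).2 hinj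
  let : Algebra (FractionRing (AnalyticGerm E)) L := FractionRing.liftAlgebra (AnalyticGerm E) L
  have : IsScalarTower ℝ (FractionRing (AnalyticGerm E)) L := .of_algebraMap_eq fun c => by
    rw [IsScalarTower.algebraMap_apply ℝ (AnalyticGerm E) (FractionRing (AnalyticGerm E)),
      ← IsScalarTower.algebraMap_apply (AnalyticGerm E) (FractionRing (AnalyticGerm E)) L,
      ← IsScalarTower.algebraMap_apply]
  exact exists_derivation_ne_zero_of_isFractionRing (FractionRing (AnalyticGerm E)) hy

theorem exists_mem_tangentSpace_lift (hℓe : ℓ e = 1) [Algebra (AnalyticGerm ℓ.ker) L]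
    [IsScalarTower ℝ (AnalyticGerm ℓ.ker) L]
    (hL : ∀ a, algebraMap (AnalyticGerm ℓ.ker) L a =
      algebraMap (AnalyticGerm E) L (pullback (projKer hℓe) a))
    {δ : Derivation ℝ (AnalyticGerm ℓ.ker) L} (hδ : δ ∈ tangentSpace ℓ.ker L) :
    ∃ δ' ∈ tangentSpace E L, δ' (coord ℓ) = 0 ∧ ∀ a, δ' (pullback (projKer hℓe) a) = δ a := by
  induction hδ using Submodule.span_induction with
  | mem _ hv =>
    obtain ⟨v, rfl⟩ := hv
    refine ⟨_, compDer_dirDeriv_mem_tangentSpace (v : E), ?_, fun a => ?_⟩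
    · simp [dirDeriv_coord]
    · simp [dirDeriv_pullback, projKer_apply_coe, hL]
  | zero => exact ⟨0, zero_mem _, rfl, fun _ => rfl⟩
  | add δ₁ δ₂ _ _ h₁ h₂ =>
    obtain ⟨δ₁', mem₁, ℓ₁, π₁⟩ := h₁
    obtain ⟨δ₂', mem₂, ℓ₂, π₂⟩ := h₂
    exact ⟨δ₁' + δ₂', add_mem mem₁ mem₂, by simp [ℓ₁, ℓ₂], fun a => by simp [π₁, π₂]⟩
  | smul c δ _ h =>
    obtain ⟨δ', mem, hℓ, hπ⟩ := h
    exact ⟨c • δ', Submodule.smul_mem _ c mem, by simp [hℓ], fun a => by simp [hπ]⟩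

theorem mem_tangentSpace_of_projKer (hℓe : ℓ e = 1)
    [Algebra (AnalyticGerm ℓ.ker) L] [IsScalarTower ℝ (AnalyticGerm ℓ.ker) L]
    (hL : ∀ a, algebraMap (AnalyticGerm ℓ.ker) L a =
      algebraMap (AnalyticGerm E) L (pullback (projKer hℓe) a))
    {h : AnalyticGerm E} (hh : pullback (.toSpanSingleton ℝ e) h ≠ 0)
    (hh0 : algebraMap (AnalyticGerm E) L h = 0) {D : Derivation ℝ L L}
    (hD : D.compAlgebraMap (AnalyticGerm ℓ.ker) ∈ tangentSpace ℓ.ker L) :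
    D.compAlgebraMap (AnalyticGerm E) ∈ tangentSpace E L := by
  obtain ⟨δ, hδ, hδℓ, hδπ⟩ := exists_mem_tangentSpace_lift hℓe hL hD
  let c := D (algebraMap (AnalyticGerm E) L (coord ℓ))
  let τ := δ + c • (Algebra.linearMap (AnalyticGerm E) L).compDer (dirDeriv e)
  have defect_eq_zero : D.compAlgebraMap (AnalyticGerm E) - τ = 0 := by
    refine derivation_eq_zero_of_eqOn_projKer hℓe ?_ (fun a => ?_) hh hh0
    · simp [τ, c, hδℓ, dirDeriv_coord, hℓe]
    · change D (algebraMap _ L (pullback (projKer hℓe) a)) - (δ (pullback (projKer hℓe) a) +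
        c * algebraMap _ L (dirDeriv e (pullback (projKer hℓe) a))) = 0
      rw [dirDeriv_pullback, projKer_apply_self, dirDeriv_zero, map_zero, map_zero, mul_zero,
        add_zero, hδπ, ← hL a]
      exact sub_self (D _)
  rw [show D.compAlgebraMap (AnalyticGerm E) = τ from sub_eq_zero.1 defect_eq_zero]
  exact add_mem hδ (Submodule.smul_mem _ c (compDer_dirDeriv_mem_tangentSpace e))

theorem exists_derivation_ne_zero [FiniteDimensional ℝ E] {y : L} (hy : Transcendental ℝ y) :
    ∃ D : Derivation ℝ L L, D y ≠ 0 ∧ D.compAlgebraMap (AnalyticGerm E) ∈ tangentSpace E L := by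
  induction hn : Module.finrank ℝ E using Nat.strong_induction_on generalizing E with
  | h n ih =>
    by_cases hinj : Function.Injective (algebraMap (AnalyticGerm E) L)
    · exact exists_derivation_ne_zero_of_injective hinj hy
    obtain ⟨h, hh0, hh⟩ : ∃ h, algebraMap (AnalyticGerm E) L h = 0 ∧ h ≠ 0 := by
      simpa [injective_iff_map_eq_zero] using hinj
    -- Weierstrass division by the relation `h` reduces to the hyperplane `ℓ.ker`.
    obtain ⟨e, heh⟩ := exists_line_ne_zero hh
    have he : e ≠ 0 := by
      rintro rfl
      rw [ContinuousLinearMap.toSpanSingleton_zero] at heh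
      exact ((isUnit_of_pullback_zero_ne_zero heh).map (algebraMap _ L)).ne_zero hh0
    obtain ⟨ℓ, hℓe⟩ := SeparatingDual.exists_eq_one (R := ℝ) he
    let : Algebra (AnalyticGerm ℓ.ker) L :=
      ((algebraMap (AnalyticGerm E) L).comp (pullback (projKer hℓe)).toRingHom).toAlgebra
    have : IsScalarTower ℝ (AnalyticGerm ℓ.ker) L := .of_algebraMap_eq fun c =>
      (IsScalarTower.algebraMap_apply ℝ (AnalyticGerm E) L c).trans
        (congrArg _ ((pullback (projKer hℓe)).commutes c).symm)
    have finrank_ker_lt : Module.finrank ℝ ℓ.ker < n := by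
      rw [← hn]
      exact Submodule.finrank_lt fun h_top => one_ne_zero
        (hℓe.symm.trans (LinearMap.mem_ker.1 (h_top ▸ Submodule.mem_top : e ∈ ℓ.ker)))
    obtain ⟨D, hDy, hD⟩ := ih _ finrank_ker_lt (E := ℓ.ker) rfl
    exact ⟨D, hDy, mem_tangentSpace_of_projKer hℓe (fun _ => rfl) heh hh0 hD⟩

/-- The algebra homomorphism which restricts germs at `0` to a filter finer than `𝓝 0`. -/
def restrict {l : Filter E} (hl : l ≤ 𝓝 0) : AnalyticGerm E →ₐ[ℝ] Germ l ℝ where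
  toFun a := a.1.compTendsto id hl
  map_one' := rfl
  map_mul' a b := by
    obtain ⟨g, hg, rfl⟩ := exists_rep a
    obtain ⟨h, hh, rfl⟩ := exists_rep b
    rfl
  map_zero' := rfl
  map_add' a b := by
    obtain ⟨g, hg, rfl⟩ := exists_rep a
    obtain ⟨h, hh, rfl⟩ := exists_rep b
    rfl
  commutes' _ := rfl

end AnalyticGerm

section Transversality

open Filter Topology

open AnalyticGerm

variable {E : Type*} [NormedAddCommGroup E] [NormedSpace ℝ E]

theorem exists_eq_sum_of_forall_apply_eq_zero {ι : Type*} [Fintype ι] {φ : ι → E →L[ℝ] ℝ}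
    {ψ : E →L[ℝ] ℝ} (h : ∀ v, (∀ i, φ i v = 0) → ψ v = 0) :
    ∃ c : ι → ℝ, ∀ v, ψ v = ∑ i, c i * φ i v := by
  have ψ_mem_span : (ψ : E →ₗ[ℝ] ℝ) ∈ Submodule.span ℝ (Set.range fun i => (φ i : E →ₗ[ℝ] ℝ)) :=
    mem_span_of_iInf_ker_le_ker fun v hv => h v (by simpa [Submodule.mem_iInf] using hv)
  obtain ⟨c, hc⟩ := (Submodule.mem_span_range_iff_exists_fun ℝ).1 ψ_mem_span
  exact ⟨c, fun v => by simpa [eq_comm] using DFunLike.congr_fun hc v⟩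

/-- This replaces the curve selection lemma: points that accumulate at `0` are followed along an
ultrafilter instead of along an analytic curve. -/
theorem eventually_eq_zero_of_fderiv_eq_sum [FiniteDimensional ℝ E] {ι : Type*} [Fintype ι]
    {f : ι → E → ℝ} {ρ : E → ℝ} (hf : ∀ i, AnalyticAt ℝ (f i) 0) (hρ : AnalyticAt ℝ ρ 0)
    (hρ0 : ρ 0 = 0) {𝒰 : Ultrafilter E} (h𝒰 : (𝒰 : Filter E) ≤ 𝓝 0)
    (hf𝒰 : ∀ i, ∀ᶠ x in 𝒰, f i x = 0)
    {c : E → ι → ℝ} (hc : ∀ᶠ x in 𝒰, ∀ v, fderiv ℝ ρ x v = ∑ i, c x i * fderiv ℝ (f i) x v) :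
    ∀ᶠ x in 𝒰, ρ x = 0 := by
  let : Algebra (AnalyticGerm E) (Germ (𝒰 : Filter E) ℝ) :=
    (restrict h𝒰).toRingHom.toAlgebra
  have : IsScalarTower ℝ (AnalyticGerm E) (Germ (𝒰 : Filter E) ℝ) :=
    .of_algebraMap_eq fun r => ((restrict h𝒰).commutes r).symm
  by_contra hρ𝒰
  obtain ⟨D, hDρ, hD⟩ := exists_derivation_ne_zero (E := E)
    (transcendental_algebraMap (L := Germ (𝒰 : Filter E) ℝ) hρ hρ0
      fun h => hρ𝒰 (Germ.coe_eq.1 h))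
  let c' (i : ι) : Germ (𝒰 : Filter E) ℝ := ((fun x => c x i : E → ℝ) : Germ (𝒰 : Filter E) ℝ)
  have dρ_eq_sum (v : E) : algebraMap _ (Germ (𝒰 : Filter E) ℝ) (dirDeriv v (of ρ hρ)) =
      ∑ i, c' i * algebraMap _ _ (dirDeriv v (of (f i) (hf i))) := by
    trans Germ.coeRingHom (𝒰 : Filter E) (∑ i, (c · i) * (fderiv ℝ (f i) · v))
    · refine Germ.coe_eq.2 (hc.mono fun x hx => (hx v).trans ?_)
      simp only [Finset.sum_apply, Pi.mul_apply]
    · simp only [map_sum, map_mul]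
      rfl
  refine hDρ ((apply_eq_sum_of_mem_tangentSpace dρ_eq_sum hD).trans
    (Finset.sum_eq_zero fun i _ => ?_))
  have f_eq_zero : (f i : Germ (𝒰 : Filter E) ℝ) = 0 := Germ.coe_eq.2 (hf𝒰 i)
  change _ * D (f i : Germ (𝒰 : Filter E) ℝ) = 0
  rw [f_eq_zero, map_zero, mul_zero]

theorem eventually_exists_fderiv_ne_zero_of_family [FiniteDimensional ℝ E] {ι : Type*} [Finite ι]
    {f : ι → E → ℝ} {ρ : E → ℝ} (hf : ∀ i, AnalyticAt ℝ (f i) 0) (hρ : AnalyticAt ℝ ρ 0)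
    (hρ0 : ρ 0 = 0) :
    ∀ᶠ x in 𝓝 0, (∀ i, f i x = 0) → ρ x ≠ 0 →
      ∃ v, (∀ i, fderiv ℝ (f i) x v = 0) ∧ fderiv ℝ ρ x v ≠ 0 := by
  have := Fintype.ofFinite ι
  by_contra frequently_bad
  rw [not_eventually, frequently_iff_neBot] at frequently_bad
  obtain ⟨𝒰, h𝒰⟩ := Ultrafilter.exists_le (h := frequently_bad)
  have eventually_bad : ∀ᶠ x in 𝒰, (∀ i, f i x = 0) ∧ ρ x ≠ 0 ∧
      ∀ v, (∀ i, fderiv ℝ (f i) x v = 0) → fderiv ℝ ρ x v = 0 := by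
    filter_upwards [le_principal_iff.1 (h𝒰.trans inf_le_right)] with x hx
    simpa using hx
  have exists_multipliers : ∀ᶠ x in 𝒰, ∃ c : ι → ℝ, ∀ v,
      fderiv ℝ ρ x v = ∑ i, c i * fderiv ℝ (f i) x v := by
    filter_upwards [eventually_bad] with x hx using exists_eq_sum_of_forall_apply_eq_zero hx.2.2
  obtain ⟨c, hc⟩ := exists_multipliers.choice
  obtain ⟨x, hρx, hx⟩ := ((eventually_eq_zero_of_fderiv_eq_sum hf hρ hρ0 (h𝒰.trans inf_le_left)
    (fun i => eventually_bad.mono fun x hx => hx.1 i) hc).and eventually_bad).exists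
  exact hx.2.1 hρx

theorem eventually_exists_fderiv_ne_zero [FiniteDimensional ℝ E] {F : Type*}
    [NormedAddCommGroup F] [NormedSpace ℝ F] [FiniteDimensional ℝ F] {f : E → F} {ρ : E → ℝ}
    (hf : AnalyticAt ℝ f 0) (hρ : AnalyticAt ℝ ρ 0) (hρ0 : ρ 0 = 0) :
    ∀ᶠ x in 𝓝 0, f x = 0 → ρ x ≠ 0 → ∃ v, fderiv ℝ f x v = 0 ∧ fderiv ℝ ρ x v ≠ 0 := by
  let coords := (Module.finBasis ℝ F).equivFunL
  let π (i : Fin (Module.finrank ℝ F)) : F →L[ℝ] ℝ := .proj i ∘L coords.toContinuousLinearMap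
  filter_upwards [hf.eventually_analyticAt, eventually_exists_fderiv_ne_zero_of_family
    (fun i => ((π i).analyticAt _).comp hf) hρ hρ0] with x hfx hx hfx0 hρx
  obtain ⟨v, hv, hρv⟩ := hx (fun i => by simp [hfx0]) hρx
  refine ⟨v, coords.injective (funext fun i => ?_), hρv⟩
  have := hv i
  rw [fderiv_comp _ (π i).differentiableAt hfx.differentiableAt, (π i).fderiv] at this
  simpa [π] using this

end Transversality

section LocalSections

open Filter Topology
open scoped Manifold

variable {E F : Type*} [NormedAddCommGroup E] [NormedSpace ℝ E]
  [NormedAddCommGroup F] [NormedSpace ℝ F]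

/-- The family `s` of subsets of `F`, parametrised by the points of `E`, has a `C¹` section near
`x`. The conditions imposed on the vector field to be constructed are families of this kind. -/
def HasLocalSection (s : E → Set F) (x : E) : Prop :=
  ∃ v : E → F, ContDiffAt ℝ 1 v x ∧ ∀ᶠ y in 𝓝 x, v y ∈ s y

theorem isOpen_setOf_hasLocalSection (s : E → Set F) : IsOpen {x | HasLocalSection s x} :=
  isOpen_iff_eventually.2 fun _ ⟨v, hv, hvs⟩ =>
    ((hv.eventually (by simp)).and hvs.eventually_nhds).mono fun _ hy => ⟨v, hy.1, hy.2⟩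

theorem hasLocalSection_of_surjective [FiniteDimensional ℝ F] {G : Type*} [NormedAddCommGroup G]
    [NormedSpace ℝ G] {T : E → G →L[ℝ] F} {b : E → F} {x : E} (hT : ContDiffAt ℝ 1 T x)
    (hb : ContDiffAt ℝ 1 b x) (hs : Function.Surjective (T x)) :
    HasLocalSection (fun y => {v | T y v = b y}) x := by
  have : CompleteSpace F := FiniteDimensional.complete ℝ F
  obtain ⟨R, hR⟩ := (T x).exists_rightInverse_of_surjective (LinearMap.range_eq_top.2 hs)
  have hTR : ContDiffAt ℝ 1 (fun y => T y ∘L R) x := hT.clm_comp contDiffAt_const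
  have hTRx : T x ∘L R = ContinuousLinearEquiv.refl ℝ F := hR
  have hinv : ContDiffAt ℝ 1 (fun y => (T y ∘L R).inverse) x :=
    ContDiffAt.comp x (g := ContinuousLinearMap.inverse)
      (hTRx ▸ contDiffAt_map_inverse (ContinuousLinearEquiv.refl ℝ F)) hTR
  refine ⟨fun y => R ((T y ∘L R).inverse (b y)),
    R.contDiff.contDiffAt.comp x (hinv.clm_apply hb), ?_⟩
  filter_upwards [hTR.continuousAt.eventually (hTRx ▸ ContinuousLinearEquiv.nhds _)] with y hy
  obtain ⟨e, he⟩ := hy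
  simp only [← he, ContinuousLinearMap.inverse_equiv]
  exact (DFunLike.congr_fun he (e.symm (b y))).symm.trans (e.apply_symm_apply _)

variable [FiniteDimensional ℝ E]

theorem exists_contDiff_forall_mem_of_hasLocalSection {s : E → Set F}
    (hs : ∀ x, Convex ℝ (s x)) (hloc : ∀ x, HasLocalSection s x) :
    ∃ v : E → F, ContDiff ℝ 1 v ∧ ∀ x, v x ∈ s x := by
  obtain ⟨v, hv⟩ := exists_contMDiffMap_forall_mem_convex_of_local (n := 1) 𝓘(ℝ, E) hs
    fun x => by
      obtain ⟨v, hv, hvs⟩ := hloc x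
      obtain ⟨u, hu, hvu⟩ := hv.contDiffOn le_rfl (by simp)
      exact ⟨_, inter_mem (by simpa using hu) hvs, v,
        (hvu.mono Set.inter_subset_left).contMDiffOn, fun y hy => hy.2⟩
  exact ⟨v, v.contMDiff.contDiff, hv⟩

theorem exists_hasCompactSupport_of_hasLocalSection {s s' : E → Set F}
    (hs : ∀ x, Convex ℝ (s x)) (hs' : ∀ x, Convex ℝ (s' x)) {K K' : Set E} (hK : IsCompact K)
    (hK' : IsCompact K') (hloc : ∀ x ∈ K, HasLocalSection s x)
    (hloc' : ∀ x ∈ K', HasLocalSection (fun y => s y ∩ s' y) x) :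
    ∃ v : E → F, ContDiff ℝ 1 v ∧ HasCompactSupport v ∧ (∀ x ∈ K, ∀ᶠ y in 𝓝 x, v y ∈ s y) ∧
      ∀ x ∈ K', ∀ᶠ y in 𝓝 x, v y ∈ s' y := by
  obtain ⟨L, hL, hKL, hLs⟩ := exists_compact_between hK (isOpen_setOf_hasLocalSection s) hloc
  obtain ⟨L', hL', hKL', hLs'⟩ :=
    exists_compact_between hK' (isOpen_setOf_hasLocalSection fun y => s y ∩ s' y) hloc'
  obtain ⟨r, hr⟩ := (hL.union hL').isBounded.subset_ball 0
  let t (x : E) : Set F :=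
    {v | (x ∈ L → v ∈ s x) ∧ (x ∈ L' → v ∈ s' x) ∧ (x ∉ Metric.ball (0 : E) r → v = 0)}
  have ht (x : E) : Convex ℝ (t x) := fun v hv w hw a b ha hb hab =>
    ⟨fun h => hs x (hv.1 h) (hw.1 h) ha hb hab, fun h => hs' x (hv.2.1 h) (hw.2.1 h) ha hb hab,
      fun h => by rw [hv.2.2 h, hw.2.2 h, smul_zero, smul_zero, add_zero]⟩
  have ball_mem {x : E} (hx : x ∈ L ∪ L') : ∀ᶠ y in 𝓝 x, y ∈ Metric.ball (0 : E) r :=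
    Metric.isOpen_ball.mem_nhds (hr hx)
  have ht_loc (x : E) : HasLocalSection t x := by
    by_cases hx' : x ∈ L'
    · obtain ⟨v, hv, hvs⟩ := hLs' hx'
      refine ⟨v, hv, ?_⟩
      filter_upwards [hvs, ball_mem (.inr hx')] with y hy hyr
      exact ⟨fun _ => hy.1, fun _ => hy.2, fun h => absurd hyr h⟩
    by_cases hx : x ∈ L
    · obtain ⟨v, hv, hvs⟩ := hLs hx
      refine ⟨v, hv, ?_⟩
      filter_upwards [hvs, ball_mem (.inl hx), hL'.isClosed.isOpen_compl.mem_nhds hx']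
        with y hy hyr hy'
      exact ⟨fun _ => hy, fun h => absurd h hy', fun h => absurd hyr h⟩
    · refine ⟨fun _ => 0, contDiffAt_const, ?_⟩
      filter_upwards [hL.isClosed.isOpen_compl.mem_nhds hx,
        hL'.isClosed.isOpen_compl.mem_nhds hx'] with y hy hy'
      exact ⟨fun h => absurd h hy, fun h => absurd h hy', fun _ => rfl⟩
  obtain ⟨v, hv, hvt⟩ := exists_contDiff_forall_mem_of_hasLocalSection ht ht_loc
  refine ⟨v, hv, .intro (isCompact_closedBall (0 : E) r) fun x hx =>
    (hvt x).2.2 fun h => hx (Metric.ball_subset_closedBall h), fun x hx => ?_, fun x hx => ?_⟩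
  · exact mem_of_superset (mem_interior_iff_mem_nhds.1 (hKL hx)) fun y => (hvt y).1
  · exact mem_of_superset (mem_interior_iff_mem_nhds.1 (hKL' hx)) fun y => (hvt y).2.1

end LocalSections

section Flows

open Filter Topology Set
open scoped NNReal

variable {E : Type*} [NormedAddCommGroup E] [NormedSpace ℝ E] {X : E → E} {K C : ℝ≥0}

theorem eqOn_Ioo_of_isIntegralCurveOn (hX : LipschitzWith K X) {γ γ' : ℝ → E} {a b t₀ : ℝ}
    (ht₀ : t₀ ∈ Ioo a b) (hγ : IsIntegralCurveOn γ (fun _ => X) (Ioo a b))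
    (hγ' : IsIntegralCurveOn γ' (fun _ => X) (Ioo a b)) (h : γ t₀ = γ' t₀) :
    EqOn γ γ' (Ioo a b) :=
  ODE_solution_unique_of_mem_Ioo (s := fun _ => univ) (fun _ _ => hX.lipschitzOnWith) ht₀
    (fun t ht => ⟨(hγ t ht).hasDerivAt (Ioo_mem_nhds ht.1 ht.2), mem_univ _⟩)
    (fun t ht => ⟨(hγ' t ht).hasDerivAt (Ioo_mem_nhds ht.1 ht.2), mem_univ _⟩) h

theorem eq_of_isIntegralCurve (hX : LipschitzWith K X) {γ γ' : ℝ → E}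
    (hγ : IsIntegralCurve γ fun _ => X) (hγ' : IsIntegralCurve γ' fun _ => X)
    (h : γ 0 = γ' 0) : γ = γ' :=
  ODE_solution_unique_univ (s := fun _ => univ) (t₀ := 0) (fun _ => hX.lipschitzOnWith)
    (fun t => ⟨hγ t, mem_univ _⟩) (fun t => ⟨hγ' t, mem_univ _⟩) h

variable [CompleteSpace E]

theorem exists_isIntegralCurveOn_continuousOn (hX : LipschitzWith K X) (hC : ∀ x, ‖X x‖ ≤ C)
    (x₀ : E) (T : ℝ≥0) :
    ∃ α : E × ℝ → E, ContinuousOn α (Metric.closedBall x₀ 1 ×ˢ Icc (-T : ℝ) T) ∧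
      ∀ x ∈ Metric.closedBall x₀ 1, α (x, 0) = x ∧
        IsIntegralCurveOn (fun t => α (x, t)) (fun _ => X) (Icc (-T : ℝ) T) := by
  have hPL : IsPicardLindelof (fun _ => X) (⟨0, by simp⟩ : Icc (-T : ℝ) T) x₀ (C * T + 1) 1 C K :=
    .of_time_independent (fun x _ => hC x) hX.lipschitzOnWith (by simp)
  obtain ⟨α, hα, hαc⟩ := hPL.exists_forall_mem_closedBall_eq_hasDerivWithinAt_continuousOn
  exact ⟨α, hαc, hα⟩

theorem exists_isIntegralCurve (hX : LipschitzWith K X) (hC : ∀ x, ‖X x‖ ≤ C) (x : E) :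
    ∃ γ : ℝ → E, γ 0 = x ∧ IsIntegralCurve γ fun _ => X := by
  have exists_curve (T : ℝ≥0) :
      ∃ γ : ℝ → E, γ 0 = x ∧ IsIntegralCurveOn γ (fun _ => X) (Ioo (-T) T) := by
    obtain ⟨α, -, hα⟩ := exists_isIntegralCurveOn_continuousOn hX hC x T
    obtain ⟨h0, hT⟩ := hα x (Metric.mem_closedBall_self zero_le_one)
    exact ⟨_, h0, hT.mono Ioo_subset_Icc_self⟩
  choose γ hγ0 hγ using exists_curve
  let γ' (t : ℝ) : E := γ (‖t‖₊ + 1) t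
  have eq_of_lt {T : ℝ≥0} {t : ℝ} (htT : |t| < T) : γ' t = γ T t := by
    obtain ⟨S, htS, hST, hSt⟩ : ∃ S : ℝ≥0, |t| < S ∧ S ≤ T ∧ S ≤ ‖t‖₊ + 1 := by
      refine ⟨min T (‖t‖₊ + 1), ?_, min_le_left _ _, min_le_right _ _⟩
      simp [htT]
    have Ioo_subset {R : ℝ≥0} (h : S ≤ R) : Ioo (-S : ℝ) S ⊆ Ioo (-R) R :=
      Ioo_subset_Ioo (by simpa using h) (by simpa using h)
    exact eqOn_Ioo_of_isIntegralCurveOn hX (t₀ := 0) (by simpa using (abs_nonneg t).trans_lt htS)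
      ((hγ _).mono (Ioo_subset hSt)) ((hγ _).mono (Ioo_subset hST)) (by rw [hγ0, hγ0])
      (abs_lt.1 htS)
  refine ⟨γ', hγ0 _, fun t => ?_⟩
  have ht : t ∈ Ioo (-((‖t‖₊ + 1 : ℝ≥0) : ℝ)) (‖t‖₊ + 1 : ℝ≥0) := abs_lt.1 (by simp)
  refine ((hγ (‖t‖₊ + 1) t ht).hasDerivAt (Ioo_mem_nhds ht.1 ht.2)).congr_of_eventuallyEq ?_
  filter_upwards [Ioo_mem_nhds ht.1 ht.2] with s hs using eq_of_lt (abs_lt.2 hs)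

theorem exists_flow (hX : LipschitzWith K X) (hC : ∀ x, ‖X x‖ ≤ C) :
    ∃ φ : Flow ℝ E, ∀ x, IsIntegralCurve (fun t => φ t x) fun _ => X := by
  choose γ hγ0 hγ using exists_isIntegralCurve hX hC
  refine ⟨⟨fun t x => γ x t, ?_, fun t₁ t₂ x => ?_, hγ0⟩, hγ⟩
  · refine continuous_iff_continuousAt.2 fun ⟨t, x₀⟩ => ?_
    obtain ⟨α, hαc, hα⟩ := exists_isIntegralCurveOn_continuousOn hX hC x₀ (‖t‖₊ + 1)
    have ht : t ∈ Ioo (-((‖t‖₊ + 1 : ℝ≥0) : ℝ)) (‖t‖₊ + 1 : ℝ≥0) := abs_lt.1 (by simp)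
    have hα_at : ContinuousAt (fun q : ℝ × E => α (q.2, q.1)) (t, x₀) :=
      (hαc.continuousAt (prod_mem_nhds (Metric.closedBall_mem_nhds x₀ one_pos)
        (Icc_mem_nhds ht.1 ht.2))).comp (f := Prod.swap) continuous_swap.continuousAt
    refine hα_at.congr ?_
    filter_upwards [prod_mem_nhds (Ioo_mem_nhds ht.1 ht.2)
      (Metric.closedBall_mem_nhds x₀ one_pos)] with ⟨s, x⟩ ⟨hs, hx⟩
    obtain ⟨h0, hcurve⟩ := hα x hx
    exact eqOn_Ioo_of_isIntegralCurveOn hX (t₀ := 0)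
      (abs_lt.1 (by rw [abs_zero]; positivity))
      (hcurve.mono Ioo_subset_Icc_self) ((hγ x).isIntegralCurveOn _) (h0.trans (hγ0 x).symm) hs
  · refine congrFun (eq_of_isIntegralCurve (γ := fun s => γ x (s + t₂)) hX
      ((hγ x).comp_add t₂) (hγ _) ?_) t₁
    rw [zero_add, hγ0]

end Flows

section InvariantSets

open Filter Topology Set

variable {E F : Type*} [NormedAddCommGroup E] [NormedSpace ℝ E]
  [NormedAddCommGroup F] [NormedSpace ℝ F] {X : E → E}

/-- `h` is constant along the integral curves of `X` near `x`, in infinitesimal form. -/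
def IsLocalFirstIntegral (X : E → E) (h : E → F) (x : E) : Prop :=
  ∀ᶠ y in 𝓝 x, DifferentiableAt ℝ h y ∧ fderiv ℝ h y (X y) = 0

theorem eventually_eq_of_isLocalFirstIntegral {γ : ℝ → E} (hγ : IsIntegralCurve γ fun _ => X)
    {h : E → F} {t : ℝ} (hX : IsLocalFirstIntegral X h (γ t)) :
    ∀ᶠ s in 𝓝 t, h (γ s) = h (γ t) := by
  obtain ⟨r, hr, hball⟩ :=
    Metric.eventually_nhds_iff_ball.1 ((hγ t).continuousAt.eventually hX)
  have deriv_zero (s : ℝ) (hs : s ∈ Metric.ball t r) : HasDerivAt (h ∘ γ) 0 s := by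
    obtain ⟨hd, h0⟩ := hball s hs
    exact h0 ▸ hd.hasFDerivAt.comp_hasDerivAt s (hγ s)
  filter_upwards [Metric.ball_mem_nhds t hr] with s hs
  exact Metric.isOpen_ball.is_const_of_deriv_eq_zero (convex_ball t r).isPreconnected
    (fun u hu => (deriv_zero u hu).differentiableAt.differentiableWithinAt)
    (fun u hu => (deriv_zero u hu).deriv) hs (Metric.mem_ball_self hr)

theorem isInvariant_of_isLocalFirstIntegral {φ : Flow ℝ E}
    (hφ : ∀ x, IsIntegralCurve (fun t => φ t x) fun _ => X) {ρ : E → ℝ} {h : E → F} {r : ℝ} {c : F}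
    (hρ : Continuous ρ) (hN : IsClosed {x | ρ x ≤ r ∧ h x = c})
    (hX : ∀ x, ρ x ≤ r → h x = c → IsLocalFirstIntegral X h x)
    (hXr : ∀ x, ρ x = r → h x = c → IsLocalFirstIntegral X ρ x) :
    IsInvariant φ {x | ρ x ≤ r ∧ h x = c} := by
  intro t x hx
  have continuous_orbit : Continuous fun t => φ t x := φ.continuous continuous_id continuous_const
  have isOpen_times : IsOpen {t | φ t x ∈ {x | ρ x ≤ r ∧ h x = c}} := by
    refine isOpen_iff_eventually.2 fun t ht => ?_
    have eventually_le : ∀ᶠ s in 𝓝 t, ρ (φ s x) ≤ r := by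
      rcases ht.1.lt_or_eq with hlt | heq
      · exact ((hρ.comp continuous_orbit).continuousAt.eventually_lt_const hlt).mono
          fun _ => le_of_lt
      · exact (eventually_eq_of_isLocalFirstIntegral (hφ x) (hXr _ heq ht.2)).mono
          fun s hs => (hs.trans heq).le
    filter_upwards [eventually_le,
      eventually_eq_of_isLocalFirstIntegral (hφ x) (hX _ ht.1 ht.2)] with s hs hs'
    exact ⟨hs, hs'.trans ht.2⟩
  have isClopen_times : IsClopen {t | φ t x ∈ {x | ρ x ≤ r ∧ h x = c}} :=
    ⟨hN.preimage continuous_orbit, isOpen_times⟩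
  exact (isClopen_times.eq_univ ⟨0, by simpa using hx⟩).ge (mem_univ t)

theorem map_flow_eq_of_related {Y : F → F} {K : NNReal} (hY : LipschitzWith K Y) {φ : Flow ℝ E}
    (hφ : ∀ x, IsIntegralCurve (fun t => φ t x) fun _ => X) {ψ : Flow ℝ F}
    (hψ : ∀ w, IsIntegralCurve (fun t => ψ t w) fun _ => Y) {f : E → F} {x : E}
    (hf : ∀ t, DifferentiableAt ℝ f (φ t x))
    (hXY : ∀ t, fderiv ℝ f (φ t x) (X (φ t x)) = Y (f (φ t x))) (t : ℝ) :
    f (φ t x) = ψ t (f x) := by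
  refine congrFun (eq_of_isIntegralCurve (γ := fun t => f (φ t x)) hY (fun t => ?_) (hψ (f x)) ?_) t
  · exact ((hf t).hasFDerivAt.comp_hasDerivAt t (hφ x t)).congr_deriv (hXY t)
  · simp

end InvariantSets

section Rotations

open Module

variable {F : Type*} [NormedAddCommGroup F] [InnerProductSpace ℝ F] [Fact (finrank ℝ F = 2)]
  (o : Orientation ℝ F (Fin 2))

/-- The flow of the rotations of an oriented plane about the origin, at unit angular speed. -/
noncomputable def rotationFlow : Flow ℝ F where
  toFun t w := o.rotation (t : Real.Angle) w
  cont' := by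
    have : FiniteDimensional ℝ F := .of_fact_finrank_eq_two
    simp only [Function.uncurry_def, o.rotation_apply, Real.Angle.cos_coe, Real.Angle.sin_coe]
    fun_prop
  map_add' t₁ t₂ w := by rw [o.rotation_rotation, Real.Angle.coe_add]
  map_zero' w := by simp

theorem isIntegralCurve_rotationFlow (w : F) :
    IsIntegralCurve (fun t => rotationFlow o t w) fun _ => o.rightAngleRotation := by
  intro t
  have h := ((Real.hasDerivAt_cos t).smul_const w).add
    ((Real.hasDerivAt_sin t).smul_const (o.rightAngleRotation w))
  convert h using 1
  · ext s
    simp [rotationFlow, o.rotation_apply]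
  · simp [rotationFlow, o.rotation_apply, add_comm]

theorem norm_rotationFlow (t : ℝ) (w : F) : ‖rotationFlow o t w‖ = ‖w‖ :=
  (o.rotation (t : Real.Angle)).norm_map w

theorem exists_continuousOn_rotationFlow_eq {a b : F} (hb : b ≠ 0) (hab : ‖a‖ = ‖b‖) :
    ∃ W : Set F, IsOpen W ∧ b ∈ W ∧ ∃ θ : F → ℝ, ContinuousOn θ W ∧
      ∀ w, ‖w‖ = ‖b‖ → rotationFlow o (θ w) a = w := by
  have : FiniteDimensional ℝ F := .of_fact_finrank_eq_two
  have continuous_kahler : Continuous fun w => o.kahler b w :=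
    (o.kahler b).continuous_of_finiteDimensional
  refine ⟨{w | o.kahler b w ∈ Complex.slitPlane},
    Complex.isOpen_slitPlane.preimage continuous_kahler, ?_,
    fun w => (o.kahler b w).arg + (o.oangle a b).toReal, fun w hw => ?_, fun w hw => ?_⟩
  · rw [Set.mem_ofPred_eq, o.kahler_apply_self, ← Complex.ofReal_pow,
      Complex.ofReal_mem_slitPlane]
    positivity
  · exact (((Complex.continuousAt_arg hw).comp (f := fun w => o.kahler b w)
      continuous_kahler.continuousAt).add continuousAt_const).continuousWithinAt
  · rw [Flow.map_add]
    change o.rotation (o.oangle b w) (o.rotation ((o.oangle a b).toReal : Real.Angle) a) = w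
    rw [Real.Angle.coe_toReal, (o.rotation_oangle_eq_iff_norm_eq a b).2 hab,
      (o.rotation_oangle_eq_iff_norm_eq b w).2 hw.symm]

end Rotations

section LocalTriviality

theorem isLocTrivFib_of_flow {τ Z B : Type} [TopologicalSpace τ] [AddGroup τ]
    [ContinuousNeg τ] [TopologicalSpace Z] [TopologicalSpace B] {p : Z → B} (hp : Continuous p)
    (φ : Flow τ Z) (ψ : Flow τ B) (hφψ : ∀ t z, p (φ t z) = ψ t (p z)) (a : B)
    (hψ : ∀ b, ∃ W : Set B, IsOpen W ∧ b ∈ W ∧ ∃ θ : B → τ, ContinuousOn θ W ∧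
      ∀ w ∈ W, ψ (θ w) a = w) :
    IsLocTrivFib p := by
  refine ⟨{z : Z // p z = a}, inferInstance, hp, fun b => ?_⟩
  obtain ⟨W, hW, hbW, θ, hθ, hθW⟩ := hψ b
  have hθ' : Continuous fun w : W => θ w := continuousOn_iff_continuous_domRestrict.1 hθ
  have continuous_base : Continuous fun z : p ⁻¹' W => (⟨p z, z.2⟩ : W) :=
    (hp.comp continuous_subtype_val).subtype_mk _
  have map_fibre (w : W) (y : {z : Z // p z = a}) : p (φ (θ w) y) = w := by
    rw [hφψ, y.2, hθW w w.2]
  have map_base (z : p ⁻¹' W) : p (φ (-θ (p z)) z) = a := by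
    rw [hφψ]
    nth_rw 2 [← hθW (p z) z.2]
    rw [← Flow.map_add, neg_add_cancel, Flow.map_zero_apply]
  refine ⟨W, hW, hbW,
    { toFun z := (⟨p z, z.2⟩, ⟨φ (-θ (p z)) z, map_base z⟩)
      invFun q := ⟨φ (θ q.1) q.2, by rw [Set.mem_preimage, map_fibre]; exact q.1.2⟩
      left_inv z := ?_
      right_inv q := ?_
      continuous_toFun := ?_
      continuous_invFun := ?_ }, fun z => rfl⟩
  · simp [← Flow.map_add, Flow.map_zero_apply]
  · ext
    · exact map_fibre q.1 q.2
    · simp [map_fibre, ← Flow.map_add, Flow.map_zero_apply]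
  · exact continuous_base.prodMk
      ((φ.continuous (hθ'.comp continuous_base).neg continuous_subtype_val).subtype_mk _)
  · exact (φ.continuous (hθ'.comp continuous_fst)
      (continuous_subtype_val.comp continuous_snd)).subtype_mk _

end LocalTriviality

section MilnorTubes

open Filter Topology Set Module

theorem exists_pos_forall_norm_le_mem {X G F : Type*} [TopologicalSpace X] [TopologicalSpace G]
    [NormedAddCommGroup F] {K : Set X} (hK : IsCompact K) {f : X → F} (hf : ContinuousOn f K)
    {T : X → G} (hT : ContinuousOn T K) {V : Set G} (hV : IsOpen V)
    (h : ∀ x ∈ K, f x = 0 → T x ∈ V) :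
    ∃ η > 0, ∀ x ∈ K, ‖f x‖ ≤ η → T x ∈ V := by
  obtain ⟨O, hO, hOV⟩ := continuousOn_iff'.1 hT V hV
  have mem_iff {x : X} (hx : x ∈ K) : T x ∈ V ↔ x ∈ O := by
    simpa [hx] using Set.ext_iff.1 hOV x
  obtain ⟨η, hη, hmin⟩ := (hK.diff hO).exists_forall_le' (f := fun x => ‖f x‖) (a := 0)
    (hf.mono sdiff_subset).norm
    fun x hx => norm_pos_iff.2 fun h0 => hx.2 ((mem_iff hx.1).1 (h x hx.1 h0))
  refine ⟨η / 2, half_pos hη, fun x hx hfx => (mem_iff hx).2 (by_contra fun hxO => ?_)⟩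
  linarith [hmin x ⟨hx, hxO⟩]

section SurjectiveMaps

variable {E F : Type*} [NormedAddCommGroup E] [NormedSpace ℝ E] [NormedAddCommGroup F]
  [NormedSpace ℝ F]

theorem isOpen_setOf_surjective [FiniteDimensional ℝ F] :
    IsOpen {T : E →L[ℝ] F | Function.Surjective T} := by
  have : CompleteSpace F := FiniteDimensional.complete ℝ F
  refine isOpen_iff_eventually.2 fun T hT => ?_
  obtain ⟨R, hR⟩ := T.exists_rightInverse_of_surjective (LinearMap.range_eq_top.2 hT)
  have hTR : T ∘L R = ContinuousLinearEquiv.refl ℝ F := hR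
  have comp_tendsto : Tendsto (fun S : E →L[ℝ] F => S ∘L R) (𝓝 T) (𝓝 (T ∘L R)) :=
    (continuous_id.clm_comp continuous_const).continuousAt
  filter_upwards [comp_tendsto.eventually (hTR ▸ ContinuousLinearEquiv.nhds _)] with S ⟨e, he⟩
  have hSR : ⇑e = S ∘ R := congrArg DFunLike.coe he
  exact (hSR ▸ e.surjective : Function.Surjective (S ∘ R)).of_comp

theorem surjective_prod {T : E →L[ℝ] F} {l : E →L[ℝ] ℝ} (hT : Function.Surjective T)
    (hl : ∃ v, T v = 0 ∧ l v ≠ 0) : Function.Surjective (T.prod l) := by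
  rintro ⟨w, r⟩
  obtain ⟨v, hTv, hlv⟩ := hl
  obtain ⟨u, hu⟩ := hT w
  refine ⟨u + ((r - l u) / l v) • v, Prod.ext ?_ ?_⟩
  · simp [hu, hTv]
  · simp [hlv]

end SurjectiveMaps

section MilnorTube

variable {E F : Type*} [NormedAddCommGroup E] [NormedAddCommGroup F]

/-- The Milnor tube `N(ε, η)` of `f`: the part of `f ⁻¹' {w | ‖w‖ = η}` in the closed `ε`-ball. -/
def milnorTube (f : E → F) (ε η : ℝ) : Set E :=
  {x ∈ Metric.closedBall 0 ε | ‖f x‖ = η}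

theorem isClosed_milnorTube {f : E → F} {ε : ℝ} (hf : ContinuousOn f (Metric.closedBall 0 ε))
    (η : ℝ) : IsClosed (milnorTube f ε η) :=
  hf.norm.preimage_isClosed_of_isClosed Metric.isClosed_closedBall isClosed_singleton

theorem isCompact_milnorTube [ProperSpace E] {f : E → F} {ε : ℝ}
    (hf : ContinuousOn f (Metric.closedBall 0 ε)) (η : ℝ) : IsCompact (milnorTube f ε η) :=
  (isCompact_closedBall (0 : E) ε).of_isClosed_subset (isClosed_milnorTube hf η) fun _ hx => hx.1

end MilnorTube

section TransverseSpheres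

variable {E F : Type*} [NormedAddCommGroup E] [InnerProductSpace ℝ E] [NormedAddCommGroup F]
  [NormedSpace ℝ F] {f : E → F}

theorem contDiffAt_fderiv_prod_innerSL {x : E} (hf : ContDiffAt ℝ 2 f x) :
    ContDiffAt ℝ 1 (fun y => (fderiv ℝ f y).prod (innerSL ℝ y)) x := by
  have prod_eq (y : E) : (fderiv ℝ f y).prod (innerSL ℝ y) =
      ContinuousLinearMap.inl ℝ F ℝ ∘L fderiv ℝ f y +
        ContinuousLinearMap.inr ℝ F ℝ ∘L innerSL ℝ y := by
    ext v <;> simp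
  simp only [prod_eq]
  exact (contDiffAt_const.clm_comp (hf.fderiv_right (by norm_num))).add
    (contDiffAt_const.clm_comp (innerSL ℝ (E := E)).contDiff.contDiffAt)

variable [FiniteDimensional ℝ E] [FiniteDimensional ℝ F]

theorem eventually_surjective_fderiv_prod_innerSL (hf : AnalyticAt ℝ f 0)
    (hs : ∀ᶠ x in 𝓝[≠] 0, Function.Surjective (fderiv ℝ f x)) :
    ∀ᶠ x in 𝓝[≠] 0, f x = 0 → Function.Surjective ((fderiv ℝ f x).prod (innerSL ℝ x)) := by
  have hρ : AnalyticAt ℝ (fun x : E => ‖x‖ ^ 2) 0 := (contDiff_norm_sq ℝ).contDiffAt.analyticAt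
  filter_upwards [hs, self_mem_nhdsWithin, nhdsWithin_le_nhds
    (eventually_exists_fderiv_ne_zero hf hρ (by simp))] with x hx hx0 hxv hfx
  obtain ⟨v, hfv, hv⟩ := hxv hfx (by simpa using hx0)
  exact surjective_prod hx ⟨v, hfv, fun h => hv (by simpa [fderiv_norm_sq_apply] using h)⟩

theorem exists_vectorField_lift {ε η : ℝ} {Y : F → F} (hY : ContDiff ℝ 1 Y)
    (hf : ∀ x ∈ Metric.closedBall 0 ε, ContDiffAt ℝ 2 f x)
    (hs : ∀ x ∈ milnorTube f ε η, Function.Surjective (fderiv ℝ f x))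
    (ht : ∀ x ∈ milnorTube f ε η ∩ Metric.sphere 0 ε,
      Function.Surjective ((fderiv ℝ f x).prod (innerSL ℝ x))) :
    ∃ X : E → E, ContDiff ℝ 1 X ∧ HasCompactSupport X ∧
      (∀ x ∈ milnorTube f ε η, ∀ᶠ y in 𝓝 x, fderiv ℝ f y (X y) = Y (f y)) ∧
      ∀ x ∈ milnorTube f ε η ∩ Metric.sphere 0 ε, ∀ᶠ y in 𝓝 x, inner ℝ y (X y) = 0 := by
  have hN : IsCompact (milnorTube f ε η) :=
    isCompact_milnorTube (fun x hx => (hf x hx).continuousAt.continuousWithinAt) η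
  have hYf (x : E) (hx : x ∈ milnorTube f ε η) : ContDiffAt ℝ 1 (fun y => Y (f y)) x :=
    hY.contDiffAt.comp x ((hf x hx.1).of_le (by norm_num))
  refine exists_hasCompactSupport_of_hasLocalSection
    (s := fun y => {v | fderiv ℝ f y v = Y (f y)}) (s' := fun y => {v | inner ℝ y v = 0})
    (fun y => (convex_singleton _).linear_preimage (fderiv ℝ f y).toLinearMap)
    (fun y => (convex_singleton _).linear_preimage (innerSL ℝ y).toLinearMap)
    hN (hN.inter_right Metric.isClosed_sphere) (fun x hx => ?_) fun x hx => ?_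
  · exact hasLocalSection_of_surjective ((hf x hx.1).fderiv_right (by norm_num)) (hYf x hx)
      (hs x hx)
  · simpa only [ContinuousLinearMap.prod_apply, Prod.mk.injEq, innerSL_apply_apply] using!
      hasLocalSection_of_surjective (contDiffAt_fderiv_prod_innerSL (hf x hx.1.1))
        ((hYf x hx.1).prodMk (contDiffAt_const (c := (0 : ℝ)))) (ht x hx)

end TransverseSpheres

theorem isInvariant_milnorTube {E F : Type*} [NormedAddCommGroup E] [InnerProductSpace ℝ E]
    [NormedAddCommGroup F] [InnerProductSpace ℝ F] {f : E → F} {ε η : ℝ} (hε : 0 ≤ ε)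
    (hη : 0 ≤ η) {X : E → E} {φ : Flow ℝ E}
    (hφ : ∀ x, IsIntegralCurve (fun t => φ t x) fun _ => X) {Y : F → F}
    (hY : ∀ w, inner ℝ w (Y w) = 0)
    (hf : ∀ x ∈ Metric.closedBall 0 ε, ∀ᶠ y in 𝓝 x, DifferentiableAt ℝ f y)
    (hX : ∀ x ∈ milnorTube f ε η, ∀ᶠ y in 𝓝 x, fderiv ℝ f y (X y) = Y (f y))
    (hX' : ∀ x ∈ milnorTube f ε η ∩ Metric.sphere 0 ε, ∀ᶠ y in 𝓝 x, inner ℝ y (X y) = 0) :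
    IsInvariant φ (milnorTube f ε η) := by
  have milnorTube_eq : milnorTube f ε η = {x | ‖x‖ ^ 2 ≤ ε ^ 2 ∧ ‖f x‖ ^ 2 = η ^ 2} := by
    ext x
    simp [milnorTube, sq_le_sq₀, hε, hη]
  have mem_tube {x : E} (h : ‖x‖ ^ 2 ≤ ε ^ 2) (h' : ‖f x‖ ^ 2 = η ^ 2) : x ∈ milnorTube f ε η :=
    milnorTube_eq.ge ⟨h, h'⟩
  have isClosed_tube : IsClosed (milnorTube f ε η) := isClosed_milnorTube
    (fun x hx => (hf x hx).self_of_nhds.continuousAt.continuousWithinAt) η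
  rw [milnorTube_eq] at isClosed_tube ⊢
  refine isInvariant_of_isLocalFirstIntegral hφ (by fun_prop) isClosed_tube
    (fun x hx hfx => ?_) fun x hx hfx => ?_
  · filter_upwards [hf x (mem_tube hx hfx).1, hX x (mem_tube hx hfx)] with y hy hXy
    refine ⟨hy.norm_sq ℝ, ?_⟩
    rw [hy.hasFDerivAt.norm_sq.fderiv]
    simp [hXy, hY]
  · have hxε : x ∈ Metric.sphere 0 ε := by
      simpa [hε] using hx
    filter_upwards [hX' x ⟨mem_tube hx.le hfx, hxε⟩] with y hy
    exact ⟨differentiableAt_id.norm_sq ℝ, by simp [fderiv_norm_sq_apply, hy]⟩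

theorem isLocTrivFib_milnorTube {E F : Type} [NormedAddCommGroup E] [InnerProductSpace ℝ E]
    [FiniteDimensional ℝ E] [NormedAddCommGroup F] [InnerProductSpace ℝ F]
    [Fact (finrank ℝ F = 2)] {f : E → F} {ε η : ℝ} (hε : 0 ≤ ε) (hη : 0 < η)
    (hf : ∀ x ∈ Metric.closedBall 0 ε, ContDiffAt ℝ 2 f x)
    (hs : ∀ x ∈ milnorTube f ε η, Function.Surjective (fderiv ℝ f x))
    (ht : ∀ x ∈ milnorTube f ε η ∩ Metric.sphere 0 ε,
      Function.Surjective ((fderiv ℝ f x).prod (innerSL ℝ x))) :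
    IsLocTrivFib (MapsTo.restrict f (milnorTube f ε η) {w | ‖w‖ = η} fun _ hx => hx.2) := by
  have : FiniteDimensional ℝ F := .of_fact_finrank_eq_two
  have finrank_eq : finrank ℝ F = 2 := Fact.out
  have : Nontrivial F := nontrivial_of_finrank_pos (R := ℝ) (finrank_eq ▸ two_pos)
  let o : Orientation ℝ F (Fin 2) := (finBasisOfFinrankEq ℝ F finrank_eq).orientation
  obtain ⟨X, hX, hXs, hXf, hXε⟩ := exists_vectorField_lift (f := f)
    o.rightAngleRotation.contDiff hf hs ht
  obtain ⟨K, hK⟩ := ContDiff.lipschitzWith_of_hasCompactSupport hXs hX one_ne_zero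
  obtain ⟨C, hC⟩ := hXs.exists_bound_of_continuous hX.continuous
  obtain ⟨φ, hφ⟩ := exists_flow hK (C := C.toNNReal) fun x => (hC x).trans (Real.le_coe_toNNReal C)
  have tube_invariant : IsInvariant φ (milnorTube f ε η) :=
    isInvariant_milnorTube hε hη.le hφ (by simp)
      (fun x hx => ((hf x hx).eventually (by simp)).mono fun y hy =>
        hy.differentiableAt two_ne_zero) hXf hXε
  have circle_invariant : IsInvariant (rotationFlow o) {w | ‖w‖ = η} := fun t w hw =>
    (norm_rotationFlow o t w).trans hw
  obtain ⟨a, ha⟩ : ∃ a : F, ‖a‖ = η := exists_norm_eq F hη.le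
  refine isLocTrivFib_of_flow ?_ (φ.restrict tube_invariant)
    ((rotationFlow o).restrict circle_invariant) (fun t x => Subtype.ext ?_) ⟨a, ha⟩ fun b => ?_
  · exact ContinuousOn.mapsToRestrict (fun x hx => (hf x hx.1).continuousAt.continuousWithinAt) _
  · exact map_flow_eq_of_related o.rightAngleRotation.lipschitz hφ
      (isIntegralCurve_rotationFlow o)
      (fun t => (hf _ (tube_invariant t x.2).1).differentiableAt two_ne_zero)
      (fun t => (hXf _ (tube_invariant t x.2)).self_of_nhds) t
  · obtain ⟨W, hW, hbW, θ, hθ, hθW⟩ := exists_continuousOn_rotationFlow_eq o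
      (norm_pos_iff.1 (hη.trans_eq b.2.symm)) (ha.trans b.2.symm)
    exact ⟨_, hW.preimage continuous_subtype_val, hbW, fun w => θ w,
      hθ.comp continuous_subtype_val.continuousOn fun _ => id,
      fun w _ => Subtype.ext (hθW w (w.2.trans b.2.symm))⟩

theorem exists_forall_isLocTrivFib_milnorTube {E F : Type} [NormedAddCommGroup E]
    [InnerProductSpace ℝ E] [FiniteDimensional ℝ E] [NormedAddCommGroup F] [InnerProductSpace ℝ F]
    [Fact (finrank ℝ F = 2)] {f : E → F} {ε : ℝ} (hε : 0 ≤ ε)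
    (hf : ∀ x ∈ Metric.closedBall 0 ε, ContDiffAt ℝ 2 f x)
    (hs : ∀ x ∈ Metric.closedBall 0 ε, f x ≠ 0 → Function.Surjective (fderiv ℝ f x))
    (ht : ∀ x ∈ Metric.sphere 0 ε, f x = 0 →
      Function.Surjective ((fderiv ℝ f x).prod (innerSL ℝ x))) :
    ∃ η₀ > 0, ∀ η, 0 < η → η ≤ η₀ →
      IsLocTrivFib (MapsTo.restrict f (milnorTube f ε η) {w | ‖w‖ = η} fun _ hx => hx.2) := by
  have : FiniteDimensional ℝ F := .of_fact_finrank_eq_two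
  have hfS (x : E) (hx : x ∈ Metric.sphere 0 ε) : ContDiffAt ℝ 2 f x :=
    hf x (Metric.sphere_subset_closedBall hx)
  obtain ⟨η₀, hη₀, hη₀t⟩ := exists_pos_forall_norm_le_mem (isCompact_sphere (0 : E) ε)
    (fun x hx => (hfS x hx).continuousAt.continuousWithinAt)
    (fun x hx => (contDiffAt_fderiv_prod_innerSL (hfS x hx)).continuousAt.continuousWithinAt)
    isOpen_setOf_surjective ht
  exact ⟨η₀, hη₀, fun η hη hηη₀ => isLocTrivFib_milnorTube hε hη hf
    (fun x hx => hs x hx.1 (norm_pos_iff.1 (hη.trans_eq hx.2.symm)))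
    fun x hx => hη₀t x hx.2 (hx.1.2.trans_le hηη₀)⟩

theorem stmt_17_general {E F : Type} [NormedAddCommGroup E] [InnerProductSpace ℝ E]
    [FiniteDimensional ℝ E] [NormedAddCommGroup F] [InnerProductSpace ℝ F]
    [Fact (finrank ℝ F = 2)] {U : Set E} (hU : IsOpen U) (h0U : 0 ∈ U) {f : E → F}
    (hf : AnalyticOnNhd ℝ f U) (hf0 : f 0 = 0)
    (hsub : ∀ x ∈ U \ {0}, Function.Surjective (fderiv ℝ f x)) :
    ∃ ε₀ > (0 : ℝ), Metric.closedBall 0 ε₀ ⊆ U ∧ ∀ ε : ℝ, 0 < ε → ε ≤ ε₀ →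
      ∃ η₀ > (0 : ℝ), ∀ η : ℝ, 0 < η → η ≤ η₀ →
        ∃ p : {x ∈ Metric.closedBall (0 : E) ε | ‖f x‖ = η} → {w : F | ‖w‖ = η},
          (∀ x, (p x : F) = f x) ∧ IsLocTrivFib p := by
  have : FiniteDimensional ℝ F := .of_fact_finrank_eq_two
  have eventually_regular : ∀ᶠ x in 𝓝[≠] 0, Function.Surjective (fderiv ℝ f x) :=
    mem_of_superset (sdiff_mem_nhdsWithin_compl (hU.mem_nhds h0U) {0}) hsub
  obtain ⟨ε₀, hε₀, hball⟩ := Metric.nhds_basis_closedBall.eventually_iff.1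
    ((hU.eventually_mem h0U).and (eventually_nhdsWithin_iff.1
      (eventually_surjective_fderiv_prod_innerSL (hf 0 h0U) eventually_regular)))
  refine ⟨ε₀, hε₀, fun x hx => (hball hx).1, fun ε hε hεε₀ => ?_⟩
  have ball_subset : Metric.closedBall (0 : E) ε ⊆ Metric.closedBall 0 ε₀ :=
    Metric.closedBall_subset_closedBall hεε₀
  obtain ⟨η₀, hη₀, hfib⟩ := exists_forall_isLocTrivFib_milnorTube hε.le
    (fun x hx => (hf x (hball (ball_subset hx)).1).contDiffAt)
    (fun x hx hfx => hsub x ⟨(hball (ball_subset hx)).1, fun h => hfx (h ▸ hf0)⟩)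
    fun x hx => (hball (ball_subset (Metric.sphere_subset_closedBall hx))).2
      (Metric.ne_of_mem_sphere hx hε.ne')
  exact ⟨η₀, hη₀, fun η hη hηη₀ => ⟨_, fun _ => rfl, hfib η hη hηη₀⟩⟩

end MilnorTubes

theorem stmt_17 (n : ℕ) (hn : 1 ≤ n)
    (U : Set (EuclideanSpace ℝ (Fin (n + 2)))) (hU : IsOpen U)
    (h0U : (0 : EuclideanSpace ℝ (Fin (n + 2))) ∈ U)
    (f : EuclideanSpace ℝ (Fin (n + 2)) → EuclideanSpace ℝ (Fin 2))
    (hf : AnalyticOnNhd ℝ f U) (hf0 : f 0 = 0)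
    -- f is locally surjective at 0
    (hloc : ∀ W ∈ nhds (0 : EuclideanSpace ℝ (Fin (n + 2))),
      f '' (W ∩ U) ∈ nhds (0 : EuclideanSpace ℝ (Fin 2)))
    -- 0 is an isolated critical point
    (hsub : ∀ x ∈ U \ {(0 : EuclideanSpace ℝ (Fin (n + 2)))},
      Function.Surjective (fderiv ℝ f x)) :
    ∃ ε₀ > (0 : ℝ), Metric.closedBall (0 : EuclideanSpace ℝ (Fin (n + 2))) ε₀ ⊆ U ∧
      ∀ ε : ℝ, 0 < ε → ε ≤ ε₀ →
      ∃ η₀ > (0 : ℝ), ∀ η : ℝ, 0 < η → η ≤ η₀ →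
        ∃ p : ({x ∈ Metric.closedBall (0 : EuclideanSpace ℝ (Fin (n + 2))) ε | ‖f x‖ = η} :
              Set _) → ({w : EuclideanSpace ℝ (Fin 2) | ‖w‖ = η} : Set _),
          (∀ x, (p x : EuclideanSpace ℝ (Fin 2)) = f x.1) ∧
          IsLocTrivFib p := by
  have : Fact (Module.finrank ℝ (EuclideanSpace ℝ (Fin 2)) = 2) := ⟨by simp⟩
  exact stmt_17_general hU h0U hf hf0 hsub
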